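/- arXiv:2206.10577 — 3 statements merged into one kernel-verified Lean document; each statement's English description precedes it below -/
import Mathlib

section
/- For every 2×2 unitary complex matrix U there exists a unique quadruple of real numbers (β₀, β₁, β₂, β₃) with β₀, β₂, β₃ ∈ [0, 2π), β₁ ∈ [0, π), and β₁ = 0 whenever β₂ ∈ {0, π}, such that U = exp(i·β₀) · P(β₃) · R_X(β₂) · P(β₁). (This is the soundness and uniqueness of the one-qubit Euler-decomposition axiom (q) of the paper.) -/
open Matrix Complex

noncomputable section

/-- The phase gate `P(φ)`. -/
def Pmat (φ : ℝ) : Matrix (Fin 2) (Fin 2) ℂ :=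
  !![1, 0; 0, Complex.exp (φ * Complex.I)]

/-- The X-rotation gate `R_X(θ)`. -/
def RXmat (θ : ℝ) : Matrix (Fin 2) (Fin 2) ℂ :=
  !![(Real.cos (θ / 2) : ℂ), -Complex.I * (Real.sin (θ / 2) : ℂ);
     -Complex.I * (Real.sin (θ / 2) : ℂ), (Real.cos (θ / 2) : ℂ)]

open scoped ComplexConjugate

/-!
A `2 × 2` unitary is determined by its first row and its determinant. The determinant of
`exp(i·β₀) · P(β₃) · R_X(β₂) · P(β₁)` is `exp(i·(2β₀ + β₁ + β₃))`, so `β₃` can be solved for once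
`β₀, β₁, β₂` are known, and these three angles have to be read off the first row `(a, b)`, a unit
vector of `ℂ²`.

The Hopf map sends `(a, b)` to the point `(|a|² - |b|², 2·i·ā·b)` of the unit sphere of `ℝ × ℂ`,
which the decomposition equates with `(cos β₂, sin β₂ · exp(i·β₁))`. These are spherical coordinates
in which a full meridian circle is swept through half a turn, so they are unique up to the choice of
meridian at the two poles `β₂ ∈ {0, π}`, where `β₁ = 0` is imposed. Finally `exp(i·β₀)` is the
position of `(a, b)` in its fibre of the Hopf map, which is a circle.
-/

theorem bijOn_circleExp_Ico (a : ℝ) :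
    Set.BijOn Circle.exp (Set.Ico a (a + 2 * Real.pi)) Set.univ := by
  refine ⟨Set.mapsTo_univ _ _, Circle.exp_injOn_Ico (by linarith), fun z _ => ?_⟩
  obtain ⟨θ, hθ, h⟩ := Circle.periodic_exp.exists_mem_Ico Real.two_pi_pos (arg z) a
  exact ⟨θ, hθ, by rw [← h, Circle.exp_arg]⟩

theorem existsUnique_mem_Ico_exp_mul_I_eq {z : ℂ} (hz : ‖z‖ = 1) :
    ∃! θ : ℝ, θ ∈ Set.Ico 0 (2 * Real.pi) ∧ exp (θ * I) = z := by
  have hbij := bijOn_circleExp_Ico 0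
  rw [zero_add] at hbij
  obtain ⟨θ, hθ, h⟩ := hbij.surjOn (Set.mem_univ ⟨z, mem_sphere_zero_iff_norm.2 hz⟩)
  have hexp : exp (θ * I) = z := congrArg Subtype.val h
  exact ⟨θ, ⟨hθ, hexp⟩, fun θ' ⟨hθ', h'⟩ =>
    hbij.injOn hθ' hθ (Circle.ext (h'.trans hexp.symm))⟩

theorem existsUnique_mem_Ico_pi_exp_mul_I_sq_eq {z : ℂ} (hz : ‖z‖ = 1) :
    ∃! φ : ℝ, φ ∈ Set.Ico 0 Real.pi ∧ exp (φ * I) ^ 2 = z := by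
  have exp_double (φ : ℝ) : exp ((2 * φ : ℝ) * I) = exp (φ * I) ^ 2 := by
    rw [← exp_nat_mul]
    push_cast
    ring_nf
  obtain ⟨θ, ⟨hθ, hexp⟩, hunique⟩ := existsUnique_mem_Ico_exp_mul_I_eq hz
  refine ⟨θ / 2, ⟨⟨by linarith [hθ.1], by linarith [hθ.2]⟩, ?_⟩, fun φ ⟨hφ, hφz⟩ => ?_⟩
  · rw [← exp_double, mul_div_cancel₀ θ two_ne_zero, hexp]
  · linarith [hunique (2 * φ) ⟨⟨by linarith [hφ.1], by linarith [hφ.2]⟩, by rw [exp_double, hφz]⟩]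

theorem existsUnique_ofReal_mul_exp_mul_I_eq (z : ℂ) :
    ∃! p : ℝ × ℝ, match p with
      | (r, φ) => φ ∈ Set.Ico 0 Real.pi ∧ (r = 0 → φ = 0) ∧ r * exp (φ * I) = z := by
  rcases eq_or_ne z 0 with rfl | hz
  · refine ⟨(0, 0), ⟨⟨le_rfl, Real.pi_pos⟩, fun _ => rfl, by simp⟩, ?_⟩
    rintro ⟨r, φ⟩ ⟨-, hr, h⟩
    obtain rfl : r = 0 := by simpa [exp_ne_zero] using h
    rw [show φ = 0 from hr rfl]
  have hnorm : (‖z‖ : ℂ) ≠ 0 := by simpa using hz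
  obtain ⟨φ, ⟨hφ, hsq⟩, hφ_unique⟩ :=
    existsUnique_mem_Ico_pi_exp_mul_I_sq_eq (z := (z / ‖z‖) ^ 2) (by simp [hz])
  obtain ⟨r, hr⟩ : ∃ r : ℝ, r * exp (φ * I) = z := by
    rcases sq_eq_sq_iff_eq_or_eq_neg.1 hsq with h | h
    · exact ⟨‖z‖, by rw [h, mul_div_cancel₀ z hnorm]⟩
    · exact ⟨-‖z‖, by rw [h, ofReal_neg, neg_mul_neg, mul_div_cancel₀ z hnorm]⟩
  refine ⟨(r, φ), ⟨hφ, fun hr0 => absurd hr ?_, hr⟩, ?_⟩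
  · simpa [show r = 0 from hr0] using hz.symm
  rintro ⟨r', φ'⟩ ⟨hφ', -, hr'⟩
  have hsq' : exp (φ' * I) ^ 2 = (z / ‖z‖) ^ 2 := by
    have hr'_ne : (r' : ℂ) ≠ 0 := left_ne_zero_of_mul (hr' ▸ hz)
    have hr'_sq : (‖z‖ : ℂ) ^ 2 = (r' : ℂ) ^ 2 := by
      rw [← hr', norm_mul, norm_exp_ofReal_mul_I, mul_one, norm_real]
      exact_mod_cast sq_abs r'
    rw [div_pow, hr'_sq, ← hr', mul_pow, mul_div_cancel_left₀ _ (pow_ne_zero 2 hr'_ne)]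
  obtain rfl := hφ_unique φ' ⟨hφ', hsq'⟩
  obtain rfl : r' = r := ofReal_injective (mul_right_cancel₀ (exp_ne_zero _) (hr'.trans hr.symm))
  rfl

theorem sin_eq_zero_iff_of_mem_Ico {θ : ℝ} (hθ : θ ∈ Set.Ico 0 (2 * Real.pi)) :
    Real.sin θ = 0 ↔ θ = 0 ∨ θ = Real.pi := by
  constructor
  · intro h
    rcases lt_trichotomy θ Real.pi with hlt | heq | hgt
    · exact .inl ((Real.sin_eq_zero_iff_of_lt_of_lt (by linarith [hθ.1, Real.pi_pos]) hlt).1 h)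
    · exact .inr heq
    · have hneg : Real.sin (θ - 2 * Real.pi) < 0 :=
        Real.sin_neg_of_neg_of_neg_pi_lt (by linarith [hθ.2]) (by linarith)
      rw [Real.sin_sub_two_pi] at hneg
      linarith
  · rintro (rfl | rfl)
    exacts [Real.sin_zero, Real.sin_pi]

theorem existsUnique_cos_sin_mul_exp_eq {q : ℝ × ℂ} (hq : q.1 ^ 2 + ‖q.2‖ ^ 2 = 1) :
    ∃! p : ℝ × ℝ, match p with
      | (θ, φ) =>
        θ ∈ Set.Ico 0 (2 * Real.pi) ∧ φ ∈ Set.Ico 0 Real.pi ∧ (θ = 0 ∨ θ = Real.pi → φ = 0) ∧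
        (Real.cos θ, Real.sin θ * exp (φ * I)) = q := by
  obtain ⟨x, w⟩ := q
  obtain ⟨⟨r, φ⟩, ⟨hφ, hr, rfl⟩, hpolar⟩ := existsUnique_ofReal_mul_exp_mul_I_eq w
  have hxr : ‖(x + r * I : ℂ)‖ = 1 := by
    rw [norm_add_mul_I, Real.sqrt_eq_one]
    simpa using hq
  obtain ⟨θ, ⟨hθ, hexp⟩, hθ_unique⟩ := existsUnique_mem_Ico_exp_mul_I_eq hxr
  have hcos : Real.cos θ = x := by simpa [exp_ofReal_mul_I_re] using congrArg re hexp
  have hsin : Real.sin θ = r := by simpa [exp_ofReal_mul_I_im] using congrArg im hexp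
  refine ⟨(θ, φ), ⟨hθ, hφ, fun hpole => hr ?_, by rw [hcos, hsin]⟩, ?_⟩
  · rw [← hsin, sin_eq_zero_iff_of_mem_Ico hθ]
    exact hpole
  rintro ⟨θ', φ'⟩ ⟨hθ', hφ', hpole', hpoint'⟩
  obtain ⟨hcos', hw'⟩ := Prod.mk.inj hpoint'
  obtain ⟨hsin', rfl⟩ := Prod.mk.inj (hpolar (Real.sin θ', φ')
    ⟨hφ', fun h0 => hpole' ((sin_eq_zero_iff_of_mem_Ico hθ').1 h0), hw'⟩)
  have hexp' : exp (θ' * I) = x + r * I := by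
    rw [exp_mul_I, ← ofReal_cos, ← ofReal_sin, hcos', hsin']
  rw [hθ_unique θ' ⟨hθ', hexp'⟩]

/-- The Hopf map from `ℂ²` to `ℝ × ℂ`, which restricts to a map from the unit sphere onto the unit
sphere. The factor `I`, a rotation of the target, matches the phase `-I` of the off-diagonal
entries of `RXmat`. -/
def hopfMap (a b : ℂ) : ℝ × ℂ :=
  (‖a‖ ^ 2 - ‖b‖ ^ 2, 2 * I * (conj a * b))

theorem hopfMap_fst_sq_add_norm_snd_sq (a b : ℂ) :
    (hopfMap a b).1 ^ 2 + ‖(hopfMap a b).2‖ ^ 2 = (‖a‖ ^ 2 + ‖b‖ ^ 2) ^ 2 := by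
  simp only [hopfMap, norm_mul, norm_I, RCLike.norm_conj, Complex.norm_two]
  ring

theorem hopfMap_mul_mul {u : ℂ} (hu : ‖u‖ = 1) (a b : ℂ) :
    hopfMap (u * a) (u * b) = hopfMap a b := by
  have huu : conj u * u = 1 := by rw [conj_mul', hu, ofReal_one, one_pow]
  refine Prod.ext (by simp [hopfMap, hu]) ?_
  simp only [hopfMap, map_mul]
  linear_combination 2 * I * conj a * b * huu

theorem hopfMap_cos_half_sin_half (θ φ : ℝ) :
    hopfMap (Real.cos (θ / 2)) (-I * exp (φ * I) * Real.sin (θ / 2)) =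
      (Real.cos θ, Real.sin θ * exp (φ * I)) := by
  have hcos : Real.cos θ = Real.cos (θ / 2) ^ 2 - Real.sin (θ / 2) ^ 2 := by
    rw [← Real.cos_two_mul', mul_div_cancel₀ θ two_ne_zero]
  have hsin : Real.sin θ = 2 * Real.sin (θ / 2) * Real.cos (θ / 2) := by
    rw [← Real.sin_two_mul, mul_div_cancel₀ θ two_ne_zero]
  refine Prod.ext ?_ ?_
  · simp only [hopfMap, norm_mul, norm_neg, norm_I, norm_exp_ofReal_mul_I, norm_real,
      Real.norm_eq_abs, one_mul, sq_abs, hcos]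
  · rw [hsin]
    simp only [hopfMap, conj_ofReal, ofReal_mul, ofReal_ofNat]
    linear_combination (-2 * Real.cos (θ / 2) * exp (φ * I) * Real.sin (θ / 2)) * I_sq

theorem existsUnique_norm_eq_one_of_hopfMap_eq {a b p q : ℂ} (hab : ‖a‖ ^ 2 + ‖b‖ ^ 2 = 1)
    (hpq : ‖p‖ ^ 2 + ‖q‖ ^ 2 = 1) (h : hopfMap a b = hopfMap p q) :
    ∃! u : ℂ, ‖u‖ = 1 ∧ a = u * p ∧ b = u * q := by
  obtain ⟨hdiff, hprod⟩ := Prod.mk.inj h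
  have hcross : conj a * b = conj p * q := mul_left_cancel₀ (by simp) hprod
  have hcross' : a * conj b = p * conj q := by simpa using congrArg conj hcross
  have haa : a * conj a = p * conj p := by
    rw [mul_conj', mul_conj']
    exact_mod_cast (by linarith : ‖a‖ ^ 2 = ‖p‖ ^ 2)
  have hbb : b * conj b = q * conj q := by
    rw [mul_conj', mul_conj']
    exact_mod_cast (by linarith : ‖b‖ ^ 2 = ‖q‖ ^ 2)
  have hunit : p * conj p + q * conj q = 1 := by
    rw [mul_conj', mul_conj']
    exact_mod_cast hpq
  -- The phase is recovered as the inner product of the unit vectors `(p, q)` and `(a, b)`.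
  obtain ⟨u, hu⟩ : ∃ u, u = conj p * a + conj q * b := ⟨_, rfl⟩
  have ha : a = u * p := by
    linear_combination -p * hu - a * hunit - a * hbb + b * hcross'
  have hb : b = u * q := by
    linear_combination -q * hu - b * hunit - b * haa + a * hcross
  have hnorm : ‖u‖ ^ 2 = 1 := by
    rw [ha, hb, norm_mul, norm_mul] at hab
    linear_combination hab - ‖u‖ ^ 2 * hpq
  refine ⟨u, ⟨(pow_eq_one_iff_of_nonneg (norm_nonneg u) two_ne_zero).1 hnorm, ha, hb⟩, ?_⟩
  rintro v ⟨-, ha', hb'⟩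
  rw [hu, ha', hb']
  linear_combination -v * hunit

theorem existsUnique_angles_of_norm_sq_add_norm_sq_eq_one {a b : ℂ}
    (hab : ‖a‖ ^ 2 + ‖b‖ ^ 2 = 1) :
    ∃! p : ℝ × ℝ × ℝ, match p with
      | (α, φ, θ) =>
        α ∈ Set.Ico 0 (2 * Real.pi) ∧ φ ∈ Set.Ico 0 Real.pi ∧ θ ∈ Set.Ico 0 (2 * Real.pi) ∧
        (θ = 0 ∨ θ = Real.pi → φ = 0) ∧
        a = exp (α * I) * Real.cos (θ / 2) ∧
        b = exp (α * I) * (-I * exp (φ * I) * Real.sin (θ / 2)) := by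
  have hsphere : (hopfMap a b).1 ^ 2 + ‖(hopfMap a b).2‖ ^ 2 = 1 := by
    rw [hopfMap_fst_sq_add_norm_snd_sq, hab, one_pow]
  obtain ⟨⟨θ, φ⟩, ⟨hθ, hφ, hpole, hpoint⟩, hunique⟩ := existsUnique_cos_sin_mul_exp_eq hsphere
  have hunit : ‖(Real.cos (θ / 2) : ℂ)‖ ^ 2 + ‖-I * exp (φ * I) * Real.sin (θ / 2)‖ ^ 2 = 1 := by
    simp only [norm_mul, norm_neg, norm_I, norm_exp_ofReal_mul_I, norm_real, Real.norm_eq_abs,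
      one_mul, sq_abs, Real.cos_sq_add_sin_sq]
  obtain ⟨u, ⟨hu, ha, hb⟩, hu_unique⟩ := existsUnique_norm_eq_one_of_hopfMap_eq hab hunit
    (hpoint.symm.trans (hopfMap_cos_half_sin_half θ φ).symm)
  obtain ⟨α, ⟨hα, rfl⟩, hα_unique⟩ := existsUnique_mem_Ico_exp_mul_I_eq hu
  refine ⟨(α, φ, θ), ⟨hα, hφ, hθ, hpole, ha, hb⟩, ?_⟩
  rintro ⟨α', φ', θ'⟩ ⟨hα', hφ', hθ', hpole', ha', hb'⟩
  have hpoint' : (Real.cos θ', Real.sin θ' * exp (φ' * I)) = hopfMap a b := by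
    rw [ha', hb', hopfMap_mul_mul (norm_exp_ofReal_mul_I α'), hopfMap_cos_half_sin_half]
  obtain ⟨rfl, rfl⟩ := Prod.mk.inj (hunique (θ', φ') ⟨hθ', hφ', hpole', hpoint'⟩)
  rw [hα_unique α' ⟨hα', hu_unique _ ⟨norm_exp_ofReal_mul_I α', ha', hb'⟩⟩]

section UnitaryGroup

variable {n R 𝕜 : Type*} [Fintype n] [DecidableEq n]

theorem adjugate_eq_det_smul_star [CommRing R] [StarRing R] {U : Matrix n n R}
    (hU : U ∈ unitaryGroup n R) : adjugate U = U.det • star U := by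
  calc adjugate U = adjugate U * (U * star U) := by rw [mem_unitaryGroup_iff.1 hU, mul_one]
    _ = U.det • star U := by rw [← mul_assoc, adjugate_mul, smul_mul_assoc, one_mul]

theorem sum_norm_sq_row_eq_one [RCLike 𝕜] {U : Matrix n n 𝕜}
    (hU : U ∈ unitaryGroup n 𝕜) (i : n) : ∑ j, ‖U i j‖ ^ 2 = 1 := by
  have h : (U * star U) i i = 1 := by rw [mem_unitaryGroup_iff.1 hU, one_apply_eq]
  simp only [mul_apply, star_apply, RCLike.star_def, RCLike.mul_conj] at h
  exact_mod_cast h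

theorem norm_det_eq_one_of_mem_unitaryGroup [RCLike 𝕜] {U : Matrix n n 𝕜}
    (hU : U ∈ unitaryGroup n 𝕜) : ‖U.det‖ = 1 := by
  have h := (det_of_mem_unitary hU).2
  rw [RCLike.star_def, RCLike.mul_conj] at h
  exact (pow_eq_one_iff_of_nonneg (norm_nonneg _) two_ne_zero).1 (by exact_mod_cast h)

theorem eq_of_mem_unitaryGroup_fin_two [CommRing R] [StarRing R] {U V : Matrix (Fin 2) (Fin 2) R}
    (hU : U ∈ unitaryGroup (Fin 2) R) (hV : V ∈ unitaryGroup (Fin 2) R)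
    (h₀₀ : U 0 0 = V 0 0) (h₀₁ : U 0 1 = V 0 1) (hdet : U.det = V.det) : U = V := by
  have second_row {W : Matrix (Fin 2) (Fin 2) R} (hW : W ∈ unitaryGroup (Fin 2) R) :
      W 1 0 = -(W.det * star (W 0 1)) ∧ W 1 1 = W.det * star (W 0 0) := by
    have h := adjugate_eq_det_smul_star hW
    rw [adjugate_fin_two] at h
    exact ⟨neg_eq_iff_eq_neg.1 (congrFun₂ h 1 0), congrFun₂ h 0 0⟩
  ext i j
  fin_cases i <;> fin_cases j
  · exact h₀₀
  · exact h₀₁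
  · simp [(second_row hU).1, (second_row hV).1, h₀₁, hdet]
  · simp [(second_row hU).2, (second_row hV).2, h₀₀, hdet]

end UnitaryGroup

theorem exp_mul_I_mem_unitary (θ : ℝ) : exp (θ * I) ∈ unitary ℂ := by
  rw [Unitary.mem_iff_self_mul_star, RCLike.star_def, mul_conj', norm_exp_ofReal_mul_I]
  simp

theorem Pmat_mem_unitaryGroup (φ : ℝ) : Pmat φ ∈ unitaryGroup (Fin 2) ℂ := by
  have h := (exp_mul_I_mem_unitary φ).2
  rw [RCLike.star_def] at h
  rw [mem_unitaryGroup_iff]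
  ext i j
  fin_cases i <;> fin_cases j <;> simp [Pmat, mul_apply, h]

theorem ofReal_cos_sq_add_ofReal_sin_sq (x : ℝ) :
    (Real.cos x : ℂ) ^ 2 + (Real.sin x : ℂ) ^ 2 = 1 := by
  exact_mod_cast Real.cos_sq_add_sin_sq x

theorem RXmat_mem_unitaryGroup (θ : ℝ) : RXmat θ ∈ unitaryGroup (Fin 2) ℂ := by
  have hstar : star (RXmat θ) = !![(Real.cos (θ / 2) : ℂ), I * (Real.sin (θ / 2) : ℂ);
      I * (Real.sin (θ / 2) : ℂ), (Real.cos (θ / 2) : ℂ)] := by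
    ext i j
    fin_cases i <;> fin_cases j <;> simp [RXmat, -ofReal_cos, -ofReal_sin]
  have hdiag : (Real.cos (θ / 2) : ℂ) * Real.cos (θ / 2) +
      -I * Real.sin (θ / 2) * (I * Real.sin (θ / 2)) = 1 := by
    linear_combination ofReal_cos_sq_add_ofReal_sin_sq (θ / 2) - (Real.sin (θ / 2) : ℂ) ^ 2 * I_sq
  have hoff : (Real.cos (θ / 2) : ℂ) * (I * Real.sin (θ / 2)) +
      -I * Real.sin (θ / 2) * Real.cos (θ / 2) = 0 := by
    ring
  rw [mem_unitaryGroup_iff, hstar, RXmat, mul_fin_two, one_fin_two, hdiag, hoff,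
    add_comm (-I * _ * (Real.cos (θ / 2) : ℂ)), hoff, add_comm (-I * _ * (I * _)), hdiag]

theorem det_Pmat (φ : ℝ) : (Pmat φ).det = exp (φ * I) := by
  simp [Pmat]

theorem det_RXmat (θ : ℝ) : (RXmat θ).det = 1 := by
  rw [RXmat, det_fin_two_of]
  linear_combination ofReal_cos_sq_add_ofReal_sin_sq (θ / 2) - (Real.sin (θ / 2) : ℂ) ^ 2 * I_sq

/-- The Euler product `exp(i·β₀) · P(β₃) · R_X(β₂) · P(β₁)` that the decomposition equates with a
given unitary. Angles are indexed as there, so the factors appear in the order `β₃, β₂, β₁`. -/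
def eulerMat (β₀ β₁ β₂ β₃ : ℝ) : Matrix (Fin 2) (Fin 2) ℂ :=
  exp (β₀ * I) • (Pmat β₃ * RXmat β₂ * Pmat β₁)

theorem eulerMat_mem_unitaryGroup (β₀ β₁ β₂ β₃ : ℝ) :
    eulerMat β₀ β₁ β₂ β₃ ∈ unitaryGroup (Fin 2) ℂ :=
  Unitary.smul_mem_of_mem (exp_mul_I_mem_unitary β₀) <|
    mul_mem (mul_mem (Pmat_mem_unitaryGroup β₃) (RXmat_mem_unitaryGroup β₂))
      (Pmat_mem_unitaryGroup β₁)

theorem eulerMat_zero_zero (β₀ β₁ β₂ β₃ : ℝ) :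
    eulerMat β₀ β₁ β₂ β₃ 0 0 = exp (β₀ * I) * Real.cos (β₂ / 2) := by
  simp [eulerMat, Pmat, RXmat]

theorem eulerMat_zero_one (β₀ β₁ β₂ β₃ : ℝ) :
    eulerMat β₀ β₁ β₂ β₃ 0 1 = exp (β₀ * I) * (-I * exp (β₁ * I) * Real.sin (β₂ / 2)) := by
  simp only [eulerMat, Pmat, RXmat, mul_fin_two, Matrix.smul_apply, of_apply, cons_val,
    smul_eq_mul]
  ring

theorem det_eulerMat (β₀ β₁ β₂ β₃ : ℝ) :
    (eulerMat β₀ β₁ β₂ β₃).det = exp (β₀ * I) ^ 2 * exp (β₁ * I) * exp (β₃ * I) := by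
  rw [eulerMat, det_smul, det_mul, det_mul, det_Pmat, det_RXmat, det_Pmat, Fintype.card_fin]
  ring

theorem eq_eulerMat_iff {U : Matrix (Fin 2) (Fin 2) ℂ} (hU : U ∈ unitaryGroup (Fin 2) ℂ)
    {β₀ β₁ β₂ β₃ : ℝ} :
    U = eulerMat β₀ β₁ β₂ β₃ ↔
      U 0 0 = exp (β₀ * I) * Real.cos (β₂ / 2) ∧
      U 0 1 = exp (β₀ * I) * (-I * exp (β₁ * I) * Real.sin (β₂ / 2)) ∧
      exp (β₃ * I) = U.det / (exp (β₀ * I) ^ 2 * exp (β₁ * I)) := by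
  have hne : exp (β₀ * I) ^ 2 * exp (β₁ * I) ≠ 0 :=
    mul_ne_zero (pow_ne_zero 2 (exp_ne_zero _)) (exp_ne_zero _)
  rw [← eulerMat_zero_zero β₀ β₁ β₂ β₃, ← eulerMat_zero_one β₀ β₁ β₂ β₃, eq_div_iff hne,
    mul_comm (exp (β₃ * I)), ← det_eulerMat β₀ β₁ β₂ β₃]
  constructor
  · rintro rfl
    exact ⟨rfl, rfl, rfl⟩
  · rintro ⟨h₀₀, h₀₁, hdet⟩
    exact eq_of_mem_unitaryGroup_fin_two hU (eulerMat_mem_unitaryGroup β₀ β₁ β₂ β₃) h₀₀ h₀₁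
      hdet.symm

/-- Every 2×2 unitary admits a unique Euler decomposition
`U = exp(i·β₀) · P(β₃) · R_X(β₂) · P(β₁)` with `β₀, β₂, β₃ ∈ [0,2π)`, `β₁ ∈ [0,π)`
and `β₁ = 0` whenever `β₂ ∈ {0, π}` (soundness and uniqueness of axiom (q)). -/
theorem euler_decomposition_2x2 (U : Matrix (Fin 2) (Fin 2) ℂ)
    (hU : U ∈ Matrix.unitaryGroup (Fin 2) ℂ) :
    ∃! β : ℝ × ℝ × ℝ × ℝ, match β with
      | (β₀, β₁, β₂, β₃) =>
        β₀ ∈ Set.Ico 0 (2 * Real.pi) ∧ β₁ ∈ Set.Ico 0 Real.pi ∧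
        β₂ ∈ Set.Ico 0 (2 * Real.pi) ∧ β₃ ∈ Set.Ico 0 (2 * Real.pi) ∧
        ((β₂ = 0 ∨ β₂ = Real.pi) → β₁ = 0) ∧
        U = Complex.exp (β₀ * Complex.I) • (Pmat β₃ * RXmat β₂ * Pmat β₁) := by
  have hrow : ‖U 0 0‖ ^ 2 + ‖U 0 1‖ ^ 2 = 1 := by
    simpa only [Fin.sum_univ_two] using sum_norm_sq_row_eq_one hU 0
  obtain ⟨⟨β₀, β₁, β₂⟩, ⟨h₀, h₁, h₂, hpole, h₀₀, h₀₁⟩, hrow_unique⟩ :=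
    existsUnique_angles_of_norm_sq_add_norm_sq_eq_one hrow
  have hphase : ‖U.det / (exp (β₀ * I) ^ 2 * exp (β₁ * I))‖ = 1 := by
    simp [norm_det_eq_one_of_mem_unitaryGroup hU, norm_exp_ofReal_mul_I]
  obtain ⟨β₃, ⟨h₃, hdet⟩, hdet_unique⟩ := existsUnique_mem_Ico_exp_mul_I_eq hphase
  refine ⟨(β₀, β₁, β₂, β₃), ⟨h₀, h₁, h₂, h₃, hpole, (eq_eulerMat_iff hU).2 ⟨h₀₀, h₀₁, hdet⟩⟩, ?_⟩
  rintro ⟨γ₀, γ₁, γ₂, γ₃⟩ ⟨g₀, g₁, g₂, g₃, gpole, hγ⟩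
  obtain ⟨g₀₀, g₀₁, gdet⟩ := (eq_eulerMat_iff hU).1 hγ
  obtain ⟨rfl, rfl, rfl⟩ : γ₀ = β₀ ∧ γ₁ = β₁ ∧ γ₂ = β₂ := by
    simpa only [Prod.mk.injEq] using hrow_unique (γ₀, γ₁, γ₂) ⟨g₀, g₁, g₂, gpole, g₀₀, g₀₁⟩
  rw [hdet_unique γ₃ ⟨g₃, gdet⟩]

end
end

section
/- For every 3×3 unitary complex matrix U there exists a unique 9-tuple of real numbers (δ₁, …, δ₉) with δ₁, δ₂, δ₅ ∈ [0, π), δ₃, δ₄, δ₆, δ₇, δ₈, δ₉ ∈ [0, 2π), and satisfying: δ₂ = 0 whenever δ₃ = 0; δ₁ = 0 whenever δ₃ = π; δ₁ = δ₂ = δ₃ = 0 whenever δ₄ = 0; δ₂ = 0 whenever δ₄ = π; δ₁ = 0 whenever δ₄ = π and δ₃ = 0; δ₅ = 0 whenever δ₆ ∈ {0, π}; such that U = D(δ₇,δ₈,δ₉) · C(δ₅,δ₆) · B(δ₄) · A(δ₁,δ₂,δ₃). (This is the soundness and uniqueness of the multi-controlled Euler axiom (r) of the paper, Proposition 15.)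 -/
open Matrix Complex

noncomputable section

/-- The matrix `A(δ₁,δ₂,δ₃)`. -/
def Amat (δ₁ δ₂ δ₃ : ℝ) : Matrix (Fin 3) (Fin 3) ℂ :=
  !![Complex.exp (δ₂ * Complex.I), 0, 0;
     0, Complex.exp ((δ₁ + δ₂) * Complex.I) * (Real.cos (δ₃ / 2) : ℂ),
        -Complex.I * (Real.sin (δ₃ / 2) : ℂ);
     0, -Complex.I * Complex.exp ((δ₁ + δ₂) * Complex.I) * (Real.sin (δ₃ / 2) : ℂ),
        (Real.cos (δ₃ / 2) : ℂ)]

/-- The matrix `B(δ₄)`. -/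
def Bmat (δ₄ : ℝ) : Matrix (Fin 3) (Fin 3) ℂ :=
  !![(Real.cos (δ₄ / 2) : ℂ), -Complex.I * (Real.sin (δ₄ / 2) : ℂ), 0;
     -Complex.I * (Real.sin (δ₄ / 2) : ℂ), (Real.cos (δ₄ / 2) : ℂ), 0;
     0, 0, 1]

/-- The matrix `C(δ₅,δ₆)`. -/
def Cmat (δ₅ δ₆ : ℝ) : Matrix (Fin 3) (Fin 3) ℂ :=
  !![1, 0, 0;
     0, Complex.exp (δ₅ * Complex.I) * (Real.cos (δ₆ / 2) : ℂ),
        -Complex.I * (Real.sin (δ₆ / 2) : ℂ);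
     0, -Complex.I * Complex.exp (δ₅ * Complex.I) * (Real.sin (δ₆ / 2) : ℂ),
        (Real.cos (δ₆ / 2) : ℂ)]

/-- The matrix `D(δ₇,δ₈,δ₉) = diag(exp(iδ₉), exp(i(δ₇+δ₈+δ₉)), exp(iδ₈))`. -/
def Dmat (δ₇ δ₈ δ₉ : ℝ) : Matrix (Fin 3) (Fin 3) ℂ :=
  !![Complex.exp (δ₉ * Complex.I), 0, 0;
     0, Complex.exp ((δ₇ + δ₈ + δ₉) * Complex.I), 0;
     0, 0, Complex.exp (δ₈ * Complex.I)]

/-!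
The last two factors `B(δ₄) · A(δ₁, δ₂, δ₃)` are determined by the first row of `U` alone: the other
two factors are block diagonal, so they only multiply that row by the phase `exp(iδ₉)`. Conversely,
once two unitary matrices have proportional first rows, their quotient is block diagonal, because a
unitary matrix whose first row vanishes off the diagonal has the same property for its first column.
Thus `U ∈ U(3)` reduces to a unit vector of `ℂ³` together with a matrix of `U(2)`, and the latter in
the same way to a unit vector of `ℂ²` together with a phase. Unit vectors are parametrized by
writing a complex number of modulus less than `1` as `exp(ix) cos(y/2)` with `x ∈ [0, π)` and
`y ∈ [0, 2π)`, where only `x` at `y = π` is ambiguous; a first entry of modulus `1` is taken care of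
by the free phase `exp(iδ₉)`. The side conditions on the angles select one representative in these
degenerate cases.
-/

section Angles

theorem existsUnique_circleExp_eq (w : Circle) :
    ∃! θ : ℝ, θ ∈ Set.Ico 0 (2 * Real.pi) ∧ Circle.exp θ = w := by
  refine existsUnique_of_exists_of_unique ?_ ?_
  · refine ⟨toIcoMod Real.two_pi_pos 0 (arg w), toIcoMod_mem_Ico' _ _, ?_⟩
    rw [toIcoMod, Circle.periodic_exp.sub_zsmul_eq, Circle.exp_arg]
  · rintro θ θ' ⟨hθ, h⟩ ⟨hθ', h'⟩
    exact Circle.exp_injOn_Ico (by simp) hθ hθ' (h.trans h'.symm)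

theorem exists_circle_mul_norm (z : ℂ) : ∃ w : Circle, z = w * ‖z‖ :=
  ⟨Circle.exp (arg z), by rw [Circle.coe_exp, mul_comm, norm_mul_exp_arg_mul_I]⟩

theorem circle_eq_of_mul_pos_eq {w w' : Circle} {r r' : ℝ} (hr : 0 < r) (hr' : 0 < r')
    (h : (w : ℂ) * r = w' * r') : w = w' := by
  have hnorm : r = r' := by
    simpa [Circle.norm_coe, abs_of_pos hr, abs_of_pos hr'] using congrArg norm h
  rw [← hnorm] at h
  exact Circle.ext (mul_right_cancel₀ (ofReal_ne_zero.mpr hr.ne') h)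

theorem existsUnique_signed_polar (z : ℂ) :
    ∃! p : ℝ × ℝ, p.2 ∈ Set.Ico 0 Real.pi ∧ (p.1 = 0 → p.2 = 0) ∧ z = p.1 * Circle.exp p.2 := by
  refine existsUnique_of_exists_of_unique ?_ ?_
  · obtain rfl | hz := eq_or_ne z 0
    · exact ⟨(0, 0), by simp [Real.pi_pos]⟩
    set k := toIcoDiv Real.pi_pos 0 (arg z)
    set x := toIcoMod Real.pi_pos 0 (arg z)
    have hexp : (Circle.exp (arg z) : ℂ) = (-1) ^ k * Circle.exp x := by
      rw [← toIcoMod_add_toIcoDiv_zsmul Real.pi_pos 0 (arg z), Circle.exp_add, Circle.exp_zsmul,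
        Circle.coe_mul, Circle.coe_zpow, Circle.coe_exp Real.pi, exp_pi_mul_I, mul_comm]
    refine ⟨(‖z‖ * (-1) ^ k, x), toIcoMod_mem_Ico' _ _, fun h ↦ ?_, ?_⟩
    · simp [hz, zpow_ne_zero] at h
    · rw [ofReal_mul, mul_assoc, ofReal_zpow, ofReal_neg, ofReal_one, ← hexp, Circle.coe_exp,
        norm_mul_exp_arg_mul_I]
  · rintro ⟨r, x⟩ ⟨r', x'⟩ ⟨hx, hr, hz⟩ ⟨hx', hr', hz'⟩
    simp only [Prod.mk.injEq] at *
    have hrot : (r : ℂ) * Circle.exp (x - x') = r' := by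
      rw [Circle.exp_sub, Circle.coe_div, ← mul_div_assoc, ← hz, hz',
        mul_div_cancel_right₀ _ (Circle.coe_ne_zero _)]
    have him : r * Real.sin (x - x') = 0 := by
      simpa only [Circle.coe_exp, im_ofReal_mul, exp_ofReal_mul_I_im, ofReal_im]
        using congrArg im hrot
    have hxx : x = x' := by
      rcases mul_eq_zero.mp him with h0 | hsin
      · have h0' : r' = 0 := by simpa [h0, eq_comm] using hrot
        rw [hr h0, hr' h0']
      · exact sub_eq_zero.mp <|
          (Real.sin_eq_zero_iff_of_lt_of_lt (by linarith [hx.1, hx'.2])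
            (by linarith [hx.2, hx'.1])).mp hsin
    exact ⟨by simpa [hxx] using hrot, hxx⟩

theorem injOn_cos_half : Set.InjOn (fun y ↦ Real.cos (y / 2)) (Set.Ico 0 (2 * Real.pi)) := by
  intro y hy y' hy' h
  have := Real.injOn_cos ⟨by linarith [hy.1], by linarith [hy.2]⟩
    ⟨by linarith [hy'.1], by linarith [hy'.2]⟩ h
  linarith

theorem cos_half_eq_zero_iff {y : ℝ} (hy : y ∈ Set.Ico 0 (2 * Real.pi)) :
    Real.cos (y / 2) = 0 ↔ y = Real.pi := by
  refine ⟨fun h ↦ injOn_cos_half hy ?_ (by simp [h]), by rintro rfl; exact Real.cos_pi_div_two⟩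
  constructor <;> linarith [Real.pi_pos]

theorem sin_half_pos {y : ℝ} (hy : y ∈ Set.Ico 0 (2 * Real.pi)) (h0 : y ≠ 0) :
    0 < Real.sin (y / 2) := by
  have hpos : 0 < y := hy.1.lt_of_ne' h0
  exact Real.sin_pos_of_pos_of_lt_pi (by linarith) (by linarith [hy.2])

theorem sin_half_eq_zero_iff {y : ℝ} (hy : y ∈ Set.Ico 0 (2 * Real.pi)) :
    Real.sin (y / 2) = 0 ↔ y = 0 :=
  ⟨fun h ↦ by_contra fun h0 ↦ (sin_half_pos hy h0).ne' h, by rintro rfl; simp⟩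

theorem exists_cos_half_sin_half {c s : ℝ} (h : c ^ 2 + s ^ 2 = 1) (hs : 0 < s) :
    ∃ y ∈ Set.Ico 0 (2 * Real.pi), Real.cos (y / 2) = c ∧ Real.sin (y / 2) = s := by
  have hc : -1 < c ∧ c < 1 := abs_lt.mp ((sq_lt_one_iff_abs_lt_one c).mp (by nlinarith))
  refine ⟨2 * Real.arccos c, ⟨?_, ?_⟩, ?_, ?_⟩
  · linarith [Real.arccos_nonneg c]
  · linarith [Real.arccos_lt_pi.mpr hc.1]
  · rw [mul_div_cancel_left₀ _ two_ne_zero, Real.cos_arccos hc.1.le hc.2.le]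
  · rw [mul_div_cancel_left₀ _ two_ne_zero, Real.sin_arccos, ← h, add_sub_cancel_left,
      Real.sqrt_sq hs.le]

end Angles

section EulerPair

/-- Normal form of the angle pairs `(x, y)` describing a point `exp (i x) cos (y / 2)` of the open
unit disc completed by the single boundary point `1`: the angle `x` is taken modulo `π` because
the cosine carries a sign, and it is set to zero where it would be ambiguous. -/
structure IsEulerPair (x y : ℝ) : Prop where
  phase_mem : x ∈ Set.Ico 0 Real.pi
  angle_mem : y ∈ Set.Ico 0 (2 * Real.pi)
  phase_eq_zero : y = 0 ∨ y = Real.pi → x = 0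

theorem isEulerPair_zero : IsEulerPair 0 0 :=
  ⟨by simp [Real.pi_pos], by simp [Real.pi_pos], fun _ ↦ rfl⟩

theorem exists_isEulerPair {z : ℂ} {s : ℝ} (h : ‖z‖ ^ 2 + s ^ 2 = 1) (hs : 0 < s) :
    ∃ x y, IsEulerPair x y ∧ z = Circle.exp x * Real.cos (y / 2) ∧ s = Real.sin (y / 2) := by
  obtain ⟨⟨r, x⟩, hx, hr, hz⟩ := (existsUnique_signed_polar z).exists
  have hnorm : ‖z‖ = |r| := by simp [hz]
  obtain ⟨y, hy, hcos, hsin⟩ := exists_cos_half_sin_half (by rwa [hnorm, sq_abs] at h) hs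
  refine ⟨x, y, ⟨hx, hy, ?_⟩, by rw [hcos, hz, mul_comm], hsin.symm⟩
  rintro (rfl | rfl)
  · simp [hs.ne] at hsin
  · exact hr (by simp [← hcos])

theorem IsEulerPair.eq_of_exp_mul_cos_half_eq {x y x' y' : ℝ} (h : IsEulerPair x y)
    (h' : IsEulerPair x' y')
    (heq : (Circle.exp x : ℂ) * Real.cos (y / 2) = Circle.exp x' * Real.cos (y' / 2)) :
    x = x' ∧ y = y' := by
  have hpolar := (existsUnique_signed_polar (Circle.exp x * Real.cos (y / 2))).unique
    (y₁ := (Real.cos (y / 2), x)) (y₂ := (Real.cos (y' / 2), x'))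
    ⟨h.phase_mem, fun h0 ↦ h.phase_eq_zero (.inr ((cos_half_eq_zero_iff h.angle_mem).mp h0)),
      mul_comm _ _⟩
    ⟨h'.phase_mem, fun h0 ↦ h'.phase_eq_zero (.inr ((cos_half_eq_zero_iff h'.angle_mem).mp h0)),
      by rw [heq, mul_comm]⟩
  obtain ⟨hcos, hx⟩ := Prod.mk.inj hpolar
  exact ⟨hx, injOn_cos_half h.angle_mem h'.angle_mem hcos⟩

/-- The phase gate `diag(exp(ix), 1)` followed by the rotation `exp(-iyX/2)` about the Pauli matrix
`X`; it is the nontrivial `2 × 2` block of `Amat` and `Cmat`. -/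
def phaseRot (x y : ℝ) : Matrix (Fin 2) (Fin 2) ℂ :=
  !![Circle.exp x * Real.cos (y / 2), -I * Real.sin (y / 2);
     -I * Circle.exp x * Real.sin (y / 2), Real.cos (y / 2)]

theorem eq_smul_phaseRot_zero_iff {a b w : ℂ} {x y : ℝ} :
    ![a, b] = w • phaseRot x y 0 ↔
      a = w * (Circle.exp x * Real.cos (y / 2)) ∧ b = w * (-I * Real.sin (y / 2)) := by
  simp [funext_iff, Fin.forall_fin_two, phaseRot]

theorem exists_isEulerPair_smul_phaseRot_zero {a b : ℂ} (h : ‖a‖ ^ 2 + ‖b‖ ^ 2 = 1) :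
    ∃ (x y : ℝ) (w : Circle), IsEulerPair x y ∧ ![a, b] = (w : ℂ) • phaseRot x y 0 := by
  simp only [eq_smul_phaseRot_zero_iff]
  obtain rfl | hb := eq_or_ne b 0
  · obtain ⟨w, hw⟩ := exists_circle_mul_norm a
    have ha : ‖a‖ = 1 := by simpa [pow_eq_one_iff_of_nonneg] using h
    exact ⟨0, 0, w, isEulerPair_zero, by simpa [ha] using hw, by simp⟩
  · obtain ⟨w, hw⟩ := exists_circle_mul_norm (I * b)
    rw [norm_mul, norm_I, one_mul] at hw
    obtain ⟨x, y, hxy, ha, hsin⟩ := exists_isEulerPair (z := a / w) (s := ‖b‖)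
      (by simpa [Circle.norm_coe] using h) (norm_pos_iff.mpr hb)
    refine ⟨x, y, w, hxy, ?_, ?_⟩
    · rw [← ha, mul_div_cancel₀ _ w.coe_ne_zero]
    · rw [← hsin]
      linear_combination -I * hw + b * I_sq

theorem existsUnique_isEulerPair_smul_phaseRot_zero {a b : ℂ} (h : ‖a‖ ^ 2 + ‖b‖ ^ 2 = 1) :
    ∃! p : ℝ × ℝ × Circle, let (x, y, w) := p
      IsEulerPair x y ∧ ![a, b] = (w : ℂ) • phaseRot x y 0 := by
  refine existsUnique_of_exists_of_unique ?_ ?_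
  · obtain ⟨x, y, w, hw⟩ := exists_isEulerPair_smul_phaseRot_zero h
    exact ⟨(x, y, w), hw⟩
  · simp only [eq_smul_phaseRot_zero_iff]
    rintro ⟨x, y, w⟩ ⟨x', y', w'⟩ ⟨hxy, ha, hb⟩ ⟨hxy', ha', hb'⟩
    have hsin : (w : ℂ) * Real.sin (y / 2) = w' * Real.sin (y' / 2) :=
      mul_left_cancel₀ (neg_ne_zero.mpr I_ne_zero) (by linear_combination hb' - hb)
    have hzero : y = 0 ↔ y' = 0 := by
      rw [← sin_half_eq_zero_iff hxy.angle_mem, ← sin_half_eq_zero_iff hxy'.angle_mem]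
      simpa [-ofReal_sin] using congrArg (· = 0) hsin
    by_cases hy : y = 0
    · have hy' := hzero.mp hy
      have hx := hxy.phase_eq_zero (.inl hy)
      have hx' := hxy'.phase_eq_zero (.inl hy')
      subst hy hy' hx hx'
      have hw : (w : ℂ) = w' := by simpa using ha.symm.trans ha'
      rw [Circle.ext hw]
    · obtain rfl := circle_eq_of_mul_pos_eq (sin_half_pos hxy.angle_mem hy)
        (sin_half_pos hxy'.angle_mem (hzero.not.mp hy)) hsin
      obtain ⟨rfl, rfl⟩ := hxy.eq_of_exp_mul_cos_half_eq hxy'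
        (mul_left_cancel₀ w.coe_ne_zero (ha.symm.trans ha'))
      rfl

theorem eq_smul_phaseRot_one_iff {a b w : ℂ} {x y : ℝ} :
    ![b, a] = w • phaseRot x y 1 ↔
      b = w * (-I * Circle.exp x * Real.sin (y / 2)) ∧ a = w * Real.cos (y / 2) := by
  simp [funext_iff, Fin.forall_fin_two, phaseRot]

theorem star_eq_smul_phaseRot_zero_iff {a b : ℂ} {w : Circle} {x y : ℝ} :
    ![star a, -star b] = (w : ℂ) • phaseRot x y 0 ↔
      ![b, a] = ((w * Circle.exp x)⁻¹ : Circle) • phaseRot x y 1 := by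
  rw [eq_smul_phaseRot_zero_iff, Circle.smul_def, eq_smul_phaseRot_one_iff, and_comm]
  refine and_congr ?_ ?_
  · rw [← (star_injective (R := ℂ)).eq_iff, star_neg, neg_eq_iff_eq_neg, star_star]
    simp only [star_mul', star_neg, star_def, conj_ofReal, conj_I, ← Circle.coe_inv_eq_conj,
      Circle.coe_inv, Circle.coe_mul]
    congr! 1
    field_simp
  · rw [← (star_injective (R := ℂ)).eq_iff, star_star]
    simp only [star_mul', star_def, conj_ofReal, ← Circle.coe_inv_eq_conj, Circle.coe_inv,
      Circle.coe_mul]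
    congr! 1
    ring

theorem existsUnique_isEulerPair_smul_phaseRot_one {a b : ℂ} (h : ‖a‖ ^ 2 + ‖b‖ ^ 2 = 1) :
    ∃! p : ℝ × ℝ × Circle, let (x, y, w) := p
      IsEulerPair x y ∧ ![b, a] = (w : ℂ) • phaseRot x y 1 := by
  let e : ℝ × ℝ × Circle ≃ ℝ × ℝ × Circle := Function.Involutive.toPerm
    (fun (x, y, w) ↦ (x, y, (w * Circle.exp x)⁻¹)) fun (x, y, w) ↦ by simp
  exact (e.existsUnique_congr fun _ ↦ and_congr_right fun _ ↦ star_eq_smul_phaseRot_zero_iff).mp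
    (existsUnique_isEulerPair_smul_phaseRot_zero (a := star a) (b := -star b) (by simpa using h))

end EulerPair

section EulerRow

/-- Normal form of the four angles in the first row of `Bmat δ₄ * Amat δ₁ δ₂ δ₃`: if its last entry
`-sin (δ₄ / 2) * sin (δ₃ / 2)` vanishes, then only the pair `(δ₁, δ₄)` carries information,
otherwise `(δ₁, δ₃)` and `(δ₂, δ₄)` are two independent pairs. The side conditions of the paper
amount to this, see `isEulerRow_iff`. -/
def IsEulerRow (δ₁ δ₂ δ₃ δ₄ : ℝ) : Prop :=
  (IsEulerPair δ₁ δ₄ ∧ δ₂ = 0 ∧ δ₃ = 0) ∨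
    (IsEulerPair δ₁ δ₃ ∧ IsEulerPair δ₂ δ₄ ∧ δ₃ ≠ 0 ∧ δ₄ ≠ 0)

theorem isEulerRow_iff {δ₁ δ₂ δ₃ δ₄ : ℝ} :
    IsEulerRow δ₁ δ₂ δ₃ δ₄ ↔
      δ₁ ∈ Set.Ico 0 Real.pi ∧ δ₂ ∈ Set.Ico 0 Real.pi ∧
      δ₃ ∈ Set.Ico 0 (2 * Real.pi) ∧ δ₄ ∈ Set.Ico 0 (2 * Real.pi) ∧
      (δ₃ = 0 → δ₂ = 0) ∧ (δ₃ = Real.pi → δ₁ = 0) ∧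
      (δ₄ = 0 → δ₁ = 0 ∧ δ₂ = 0 ∧ δ₃ = 0) ∧ (δ₄ = Real.pi → δ₂ = 0) ∧
      (δ₄ = Real.pi → δ₃ = 0 → δ₁ = 0) := by
  have hpi := Real.pi_pos
  constructor
  · rintro (⟨⟨h₁, h₄, h⟩, rfl, rfl⟩ | ⟨⟨h₁, h₃, h⟩, ⟨h₂, h₄, h'⟩, h₃₀, h₄₀⟩)
    · simp_all [hpi.ne]
    · tauto
  · rintro ⟨h₁, h₂, h₃, h₄, c₁, c₂, c₃, c₄, c₅⟩
    by_cases h₃₀ : δ₃ = 0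
    · exact .inl ⟨⟨h₁, h₄, by tauto⟩, c₁ h₃₀, h₃₀⟩
    · exact .inr ⟨⟨h₁, h₃, by tauto⟩, ⟨h₂, h₄, by tauto⟩, h₃₀, by tauto⟩

theorem Bmat_mul_Amat_zero (δ₁ δ₂ δ₃ δ₄ : ℝ) :
    (Bmat δ₄ * Amat δ₁ δ₂ δ₃) 0 =
      ![(Circle.exp δ₂ * Real.cos (δ₄ / 2) : ℂ),
        -I * Real.sin (δ₄ / 2) * (Circle.exp δ₂ * (Circle.exp δ₁ * Real.cos (δ₃ / 2))),
        -(Real.sin (δ₄ / 2) * Real.sin (δ₃ / 2))] := by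
  ext j
  fin_cases j <;>
    simp [Bmat, Amat, Matrix.mul_apply, Fin.sum_univ_three, -ofReal_cos, -ofReal_sin, add_mul,
      exp_add, -mul_eq_mul_left_iff]
  · ring
  · ring
  · linear_combination (Real.sin (δ₄ / 2) * Real.sin (δ₃ / 2) : ℂ) * I_sq

theorem eq_smul_Bmat_mul_Amat_zero_iff {a b c w : ℂ} {δ₁ δ₂ δ₃ δ₄ : ℝ} :
    ![a, b, c] = w • (Bmat δ₄ * Amat δ₁ δ₂ δ₃) 0 ↔
      a = w * (Circle.exp δ₂ * Real.cos (δ₄ / 2)) ∧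
      b = w * (-I * Real.sin (δ₄ / 2) *
        (Circle.exp δ₂ * (Circle.exp δ₁ * Real.cos (δ₃ / 2)))) ∧
      c = w * -(Real.sin (δ₄ / 2) * Real.sin (δ₃ / 2)) := by
  simp [Bmat_mul_Amat_zero, funext_iff, Fin.forall_fin_succ, -Circle.coe_exp, -ofReal_cos,
    -ofReal_sin]

theorem existsUnique_isEulerRow_of_last_eq_zero {a b : ℂ} (h : ‖a‖ ^ 2 + ‖b‖ ^ 2 = 1) :
    ∃! p : ℝ × ℝ × ℝ × ℝ × Circle, let (δ₁, δ₂, δ₃, δ₄, w) := p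
      IsEulerRow δ₁ δ₂ δ₃ δ₄ ∧ ![a, b, 0] = (w : ℂ) • (Bmat δ₄ * Amat δ₁ δ₂ δ₃) 0 := by
  obtain ⟨⟨x, y, w⟩, ⟨hxy, hrow⟩, huniq⟩ := existsUnique_isEulerPair_smul_phaseRot_one h
  rw [eq_smul_phaseRot_one_iff] at hrow
  refine ⟨(x, 0, 0, y, w), ⟨.inl ⟨hxy, rfl, rfl⟩, eq_smul_Bmat_mul_Amat_zero_iff.mpr ?_⟩, ?_⟩
  · refine ⟨by simpa using hrow.2, hrow.1.trans ?_, by simp⟩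
    simp
    ring
  · rintro ⟨δ₁, δ₂, δ₃, δ₄, w'⟩ ⟨⟨hpair, rfl, rfl⟩ | ⟨h₁₃, h₂₄, h₃, h₄⟩, heq⟩ <;>
      obtain ⟨ha, hb, hc⟩ := eq_smul_Bmat_mul_Amat_zero_iff.mp heq
    · have := huniq (δ₁, δ₄, w') ⟨hpair, eq_smul_phaseRot_one_iff.mpr
        ⟨hb.trans (by simp; ring), by simpa using ha⟩⟩
      simpa using this
    · have hs := mul_pos (sin_half_pos h₂₄.angle_mem h₄) (sin_half_pos h₁₃.angle_mem h₃)
      exact absurd hc.symm (mul_ne_zero w'.coe_ne_zero (neg_ne_zero.mpr (mod_cast hs.ne')))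

theorem exists_isEulerRow_of_last_ne_zero {a b c : ℂ}
    (h : ‖a‖ ^ 2 + ‖b‖ ^ 2 + ‖c‖ ^ 2 = 1) (hc : c ≠ 0) :
    ∃ (δ₁ δ₂ δ₃ δ₄ : ℝ) (w : Circle),
      IsEulerRow δ₁ δ₂ δ₃ δ₄ ∧ ![a, b, c] = (w : ℂ) • (Bmat δ₄ * Amat δ₁ δ₂ δ₃) 0 := by
  simp only [eq_smul_Bmat_mul_Amat_zero_iff]
  obtain ⟨w, hw⟩ := exists_circle_mul_norm (-c)
  rw [norm_neg] at hw
  set s := √(‖b‖ ^ 2 + ‖c‖ ^ 2)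
  have hs : 0 < s := by positivity
  have hs_sq : s ^ 2 = ‖b‖ ^ 2 + ‖c‖ ^ 2 := Real.sq_sqrt (by positivity)
  obtain ⟨δ₂, δ₄, h₂₄, hcos₄, hsin₄⟩ := exists_isEulerPair (z := a / w) (s := s)
    (by simpa [Circle.norm_coe, hs_sq, add_assoc] using h) hs
  have hnorm : ‖I * b / (s * (w * Circle.exp δ₂))‖ = ‖b‖ / s := by
    simp [Circle.norm_coe, abs_of_pos hs]
  obtain ⟨δ₁, δ₃, h₁₃, hcos₃, hsin₃⟩ := exists_isEulerPair
    (z := I * b / (s * (w * Circle.exp δ₂))) (s := ‖c‖ / s)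
    (by rw [hnorm]; field_simp; exact hs_sq.symm) (by positivity)
  refine ⟨δ₁, δ₂, δ₃, δ₄, w, .inr ⟨h₁₃, h₂₄, ?_, ?_⟩, ?_, ?_, ?_⟩
  · rintro rfl
    simp [hs.ne', hc] at hsin₃
  · rintro rfl
    simp [hs.ne'] at hsin₄
  · rw [← hcos₄, mul_div_cancel₀ _ w.coe_ne_zero]
  · rw [← hcos₃, ← hsin₄]
    have := ofReal_ne_zero.mpr hs.ne'
    field_simp [w.coe_ne_zero, (Circle.exp δ₂).coe_ne_zero]
    linear_combination b * I_sq
  · rw [← hsin₄, ← hsin₃, ← ofReal_mul, mul_div_cancel₀ _ hs.ne']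
    linear_combination -hw

theorem existsUnique_isEulerRow_of_last_ne_zero {a b c : ℂ}
    (h : ‖a‖ ^ 2 + ‖b‖ ^ 2 + ‖c‖ ^ 2 = 1) (hc : c ≠ 0) :
    ∃! p : ℝ × ℝ × ℝ × ℝ × Circle, let (δ₁, δ₂, δ₃, δ₄, w) := p
      IsEulerRow δ₁ δ₂ δ₃ δ₄ ∧ ![a, b, c] = (w : ℂ) • (Bmat δ₄ * Amat δ₁ δ₂ δ₃) 0 := by
  refine existsUnique_of_exists_of_unique ?_ ?_
  · obtain ⟨δ₁, δ₂, δ₃, δ₄, w, hw⟩ := exists_isEulerRow_of_last_ne_zero h hc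
    exact ⟨(δ₁, δ₂, δ₃, δ₄, w), hw⟩
  · simp only [eq_smul_Bmat_mul_Amat_zero_iff]
    rintro ⟨δ₁, δ₂, δ₃, δ₄, w⟩ ⟨δ₁', δ₂', δ₃', δ₄', w'⟩ ⟨hrow, ha, hb, hc₁⟩
      ⟨hrow', ha', hb', hc₁'⟩
    obtain ⟨-, -, rfl⟩ | ⟨h₁₃, h₂₄, h₃, h₄⟩ := hrow
    · simp [hc] at hc₁
    obtain ⟨-, -, rfl⟩ | ⟨h₁₃', h₂₄', h₃', h₄'⟩ := hrow'
    · simp [hc] at hc₁'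
    obtain rfl : w = w' := circle_eq_of_mul_pos_eq
      (mul_pos (sin_half_pos h₂₄.angle_mem h₄) (sin_half_pos h₁₃.angle_mem h₃))
      (mul_pos (sin_half_pos h₂₄'.angle_mem h₄') (sin_half_pos h₁₃'.angle_mem h₃'))
      (by push_cast [-ofReal_sin]; linear_combination hc₁ - hc₁')
    obtain ⟨rfl, rfl⟩ := h₂₄.eq_of_exp_mul_cos_half_eq h₂₄'
      (mul_left_cancel₀ w.coe_ne_zero (ha.symm.trans ha'))
    have hsin₄ : (Real.sin (δ₄ / 2) : ℂ) ≠ 0 :=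
      ofReal_ne_zero.mpr (sin_half_pos h₂₄.angle_mem h₄).ne'
    obtain ⟨rfl, rfl⟩ := h₁₃.eq_of_exp_mul_cos_half_eq h₁₃' <|
      mul_left_cancel₀ (Circle.coe_ne_zero (Circle.exp δ₂)) <|
      mul_left_cancel₀ (mul_ne_zero (neg_ne_zero.mpr I_ne_zero) hsin₄) <|
      mul_left_cancel₀ w.coe_ne_zero (hb.symm.trans hb')
    rfl

theorem existsUnique_isEulerRow {a b c : ℂ} (h : ‖a‖ ^ 2 + ‖b‖ ^ 2 + ‖c‖ ^ 2 = 1) :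
    ∃! p : ℝ × ℝ × ℝ × ℝ × Circle, let (δ₁, δ₂, δ₃, δ₄, w) := p
      IsEulerRow δ₁ δ₂ δ₃ δ₄ ∧ ![a, b, c] = (w : ℂ) • (Bmat δ₄ * Amat δ₁ δ₂ δ₃) 0 := by
  obtain rfl | hc := eq_or_ne c 0
  · exact existsUnique_isEulerRow_of_last_eq_zero (by simpa using h)
  · exact existsUnique_isEulerRow_of_last_ne_zero h hc

end EulerRow

section Bordered

variable {α : Type*} {n : ℕ}

theorem apply_eq_zero_of_mem_unitaryGroup {m : Type*} [Fintype m] [DecidableEq m] [CommRing α]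
    [StarRing α] {V : Matrix m m α} (hV : V ∈ unitaryGroup m α) {i : m}
    (h : ∀ k, k ≠ i → V i k = 0) {j : m} (hj : j ≠ i) : V j i = 0 := by
  have hrow : ∀ k, (V * star V) k i = V k i * star (V i i) := fun k ↦ by
    rw [Matrix.mul_apply, Finset.sum_eq_single i (fun l _ hl ↦ by simp [star_apply, h l hl])
      (by simp), star_apply]
  simp only [mem_unitaryGroup_iff.mp hV] at hrow
  have hunit : IsUnit (star (V i i)) := .of_mul_eq_one_right (V i i) (by simpa using (hrow i).symm)
  exact hunit.mul_left_eq_zero.mp (by simpa [hj] using (hrow j).symm)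

/-- The block diagonal matrix with a `1 × 1` block `z` in the top left corner followed by `M`,
indexed by `Fin (n + 1)`. -/
def bordered [Zero α] (z : α) (M : Matrix (Fin n) (Fin n) α) :
    Matrix (Fin (n + 1)) (Fin (n + 1)) α :=
  of (Fin.cons (Fin.cons z 0) fun i ↦ Fin.cons 0 (M i))

section Zero

variable [Zero α] (z : α) (M : Matrix (Fin n) (Fin n) α) (i j : Fin n)

@[simp]
theorem bordered_zero_zero : bordered z M 0 0 = z := rfl

@[simp]
theorem bordered_zero_succ : bordered z M 0 j.succ = 0 := rfl

@[simp]
theorem bordered_succ_zero : bordered z M i.succ 0 = 0 := rfl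

@[simp]
theorem bordered_succ_succ : bordered z M i.succ j.succ = M i j := rfl

end Zero

theorem bordered_mul_bordered [NonUnitalNonAssocSemiring α] (z w : α)
    (M N : Matrix (Fin n) (Fin n) α) :
    bordered z M * bordered w N = bordered (z * w) (M * N) := by
  ext i j
  cases i using Fin.cases <;> cases j using Fin.cases <;>
    simp [Matrix.mul_apply, Fin.sum_univ_succ]

theorem bordered_injective_right [Zero α] (z : α) :
    Function.Injective (bordered z : Matrix (Fin n) (Fin n) α → _) := fun M N h ↦ by
  ext i j
  simpa using congrFun₂ h i.succ j.succ

theorem bordered_one_one [Zero α] [One α] :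
    bordered 1 (1 : Matrix (Fin n) (Fin n) α) = 1 := by
  ext i j
  cases i using Fin.cases <;> cases j using Fin.cases <;>
    simp [Matrix.one_apply, (Fin.succ_ne_zero _).symm]

theorem star_bordered [NonUnitalNonAssocSemiring α] [StarRing α] (z : α)
    (M : Matrix (Fin n) (Fin n) α) :
    star (bordered z M) = bordered (star z) (star M) := by
  ext i j
  cases i using Fin.cases <;> cases j using Fin.cases <;> simp [star_apply]

theorem bordered_mul_zero [NonUnitalNonAssocSemiring α] (z : α) (V : Matrix (Fin n) (Fin n) α)
    (M : Matrix (Fin (n + 1)) (Fin (n + 1)) α) : (bordered z V * M) 0 = z • M 0 := by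
  ext j
  simp [Matrix.mul_apply, Fin.sum_univ_succ]

variable [CommRing α] [StarRing α]

theorem bordered_mem_unitaryGroup_iff {z : α} {M : Matrix (Fin n) (Fin n) α} (hz : z ∈ unitary α) :
    bordered z M ∈ unitaryGroup (Fin (n + 1)) α ↔ M ∈ unitaryGroup (Fin n) α := by
  rw [mem_unitaryGroup_iff, mem_unitaryGroup_iff, star_bordered, bordered_mul_bordered,
    Unitary.mul_star_self_of_mem hz, ← bordered_one_one, (bordered_injective_right 1).eq_iff]

theorem eq_bordered_of_mem_unitaryGroup {W : Matrix (Fin (n + 1)) (Fin (n + 1)) α}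
    (hW : W ∈ unitaryGroup (Fin (n + 1)) α) (hrow : ∀ j : Fin n, W 0 j.succ = 0) :
    W = bordered (W 0 0) (W.submatrix Fin.succ Fin.succ) := by
  ext i j
  cases i using Fin.cases <;> cases j using Fin.cases
  · rfl
  · exact hrow _
  · exact apply_eq_zero_of_mem_unitaryGroup hW
      (Fin.cases (absurd rfl) fun k _ ↦ hrow k) (Fin.succ_ne_zero _)
  · rfl

theorem existsUnique_eq_bordered_mul {z : α} (hz : z ∈ unitary α)
    {U M : Matrix (Fin (n + 1)) (Fin (n + 1)) α} (hU : U ∈ unitaryGroup (Fin (n + 1)) α)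
    (hM : M ∈ unitaryGroup (Fin (n + 1)) α) (hrow : U 0 = z • M 0) :
    ∃! V, V ∈ unitaryGroup (Fin n) α ∧ U = bordered z V * M := by
  set W := U * star M with hW
  have hW_row (j : Fin (n + 1)) : W 0 j = z * (1 : Matrix (Fin (n + 1)) (Fin (n + 1)) α) 0 j := by
    rw [hW, mul_apply_eq_vecMul, hrow, smul_vecMul, ← mul_apply_eq_vecMul,
      mem_unitaryGroup_iff.mp hM, Pi.smul_apply, smul_eq_mul]
  have hW_mem : W ∈ unitaryGroup (Fin (n + 1)) α := mul_mem hU (Unitary.star_mem hM)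
  have hW_bordered := eq_bordered_of_mem_unitaryGroup hW_mem fun j ↦ by
    rw [hW_row, one_apply_ne (Fin.succ_ne_zero j).symm, mul_zero]
  rw [hW_row, one_apply_eq, mul_one] at hW_bordered
  refine ⟨W.submatrix Fin.succ Fin.succ, ⟨?_, ?_⟩, fun V hV ↦ ?_⟩
  · rwa [← bordered_mem_unitaryGroup_iff hz, ← hW_bordered]
  · rw [← hW_bordered, hW, mul_assoc, mem_unitaryGroup_iff'.mp hM, mul_one]
  · apply bordered_injective_right z
    rw [← hW_bordered, hW, hV.2, mul_assoc, mem_unitaryGroup_iff.mp hM, mul_one]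

end Bordered

section Unitary

theorem sum_norm_sq_of_mem_unitaryGroup {m 𝕜 : Type*} [Fintype m] [DecidableEq m] [RCLike 𝕜]
    {U : Matrix m m 𝕜} (hU : U ∈ unitaryGroup m 𝕜) (i : m) : ∑ j, ‖U i j‖ ^ 2 = 1 := by
  have h : (U * star U) i i = 1 := by rw [mem_unitaryGroup_iff.mp hU, one_apply_eq]
  simpa only [Matrix.mul_apply, star_apply, RCLike.star_def, RCLike.mul_conj, ← RCLike.ofReal_pow,
    ← RCLike.ofReal_sum, ← RCLike.ofReal_one (K := 𝕜), RCLike.ofReal_inj] using h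

theorem circle_mem_unitary (w : Circle) : (w : ℂ) ∈ unitary ℂ := by
  rw [Unitary.mem_iff_self_mul_star, star_def, ← Circle.coe_inv_eq_conj, ← Circle.coe_mul,
    mul_inv_cancel, Circle.coe_one]

theorem fin_one_circle_mem_unitaryGroup (g : Circle) : !![(g : ℂ)] ∈ unitaryGroup (Fin 1) ℂ := by
  rw [mem_unitaryGroup_iff]
  ext i j
  rw [Subsingleton.elim i 0, Subsingleton.elim j 0]
  simpa [Matrix.mul_apply] using Unitary.mul_star_self_of_mem (circle_mem_unitary g)

theorem existsUnique_circle_eq_of_mem_unitaryGroup {V : Matrix (Fin 1) (Fin 1) ℂ}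
    (hV : V ∈ unitaryGroup (Fin 1) ℂ) : ∃! g : Circle, V = !![(g : ℂ)] := by
  have hnorm : ‖V 0 0‖ = 1 := by
    simpa [pow_eq_one_iff_of_nonneg] using sum_norm_sq_of_mem_unitaryGroup hV 0
  refine ⟨⟨V 0 0, mem_sphere_zero_iff_norm.mpr hnorm⟩, ?_, fun g hg ↦ ?_⟩
  · ext i j
    rw [Subsingleton.elim i 0, Subsingleton.elim j 0]
    rfl
  · ext
    simp [hg]

theorem phaseRot_mem_unitaryGroup (x y : ℝ) : phaseRot x y ∈ unitaryGroup (Fin 2) ℂ := by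
  have htrig : (Real.cos (y / 2) : ℂ) ^ 2 + Real.sin (y / 2) ^ 2 = 1 :=
    mod_cast Real.cos_sq_add_sin_sq (y / 2)
  have hexp : (Circle.exp x : ℂ) * starRingEnd ℂ (Circle.exp x) = 1 :=
    Unitary.mul_star_self_of_mem (circle_mem_unitary _)
  rw [mem_unitaryGroup_iff]
  ext i j
  fin_cases i <;> fin_cases j <;>
    simp [phaseRot, Matrix.mul_apply, star_apply, Fin.sum_univ_two, conj_ofReal, -ofReal_cos,
      -ofReal_sin, -Circle.coe_exp] <;>
    grind [I_sq]

theorem Bmat_mem_unitaryGroup (δ₄ : ℝ) : Bmat δ₄ ∈ unitaryGroup (Fin 3) ℂ := by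
  have htrig : (Real.cos (δ₄ / 2) : ℂ) ^ 2 + Real.sin (δ₄ / 2) ^ 2 = 1 :=
    mod_cast Real.cos_sq_add_sin_sq (δ₄ / 2)
  rw [mem_unitaryGroup_iff]
  ext i j
  fin_cases i <;> fin_cases j <;>
    simp [Bmat, Matrix.mul_apply, star_apply, Fin.sum_univ_three, conj_ofReal, -ofReal_cos,
      -ofReal_sin] <;>
    grind [I_sq]

theorem bordered_fin_two (z a b c d : ℂ) :
    bordered z !![a, b; c, d] = !![z, 0, 0; 0, a, b; 0, c, d] := by
  ext i j
  fin_cases i <;> fin_cases j <;> rfl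

theorem bordered_fin_one (z a : ℂ) : bordered z !![a] = !![z, 0; 0, a] := by
  ext i j
  fin_cases i <;> fin_cases j <;> rfl

theorem Amat_eq_bordered (δ₁ δ₂ δ₃ : ℝ) :
    Amat δ₁ δ₂ δ₃ = bordered (Circle.exp δ₂ : ℂ) (phaseRot (δ₁ + δ₂) δ₃) := by
  simp only [Amat, phaseRot, bordered_fin_two, Circle.coe_exp, ofReal_add]

theorem Cmat_eq_bordered (δ₅ δ₆ : ℝ) : Cmat δ₅ δ₆ = bordered 1 (phaseRot δ₅ δ₆) := by
  simp only [Cmat, phaseRot, bordered_fin_two, Circle.coe_exp]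

theorem Dmat_eq_bordered (δ₇ δ₈ δ₉ : ℝ) :
    Dmat δ₇ δ₈ δ₉ = bordered (Circle.exp δ₉ : ℂ)
      (bordered (Circle.exp (δ₇ + δ₈ + δ₉) : ℂ) !![(Circle.exp δ₈ : ℂ)]) := by
  simp only [Dmat, bordered_fin_one, bordered_fin_two, Circle.coe_exp, ofReal_add]

theorem Amat_mem_unitaryGroup (δ₁ δ₂ δ₃ : ℝ) : Amat δ₁ δ₂ δ₃ ∈ unitaryGroup (Fin 3) ℂ := by
  rw [Amat_eq_bordered, bordered_mem_unitaryGroup_iff (circle_mem_unitary _)]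
  exact phaseRot_mem_unitaryGroup _ _

theorem Dmat_mul_Cmat (δ₅ δ₆ δ₇ δ₈ δ₉ : ℝ) :
    Dmat δ₇ δ₈ δ₉ * Cmat δ₅ δ₆ = bordered (Circle.exp δ₉ : ℂ)
      (bordered (Circle.exp (δ₇ + δ₈ + δ₉) : ℂ) !![(Circle.exp δ₈ : ℂ)] * phaseRot δ₅ δ₆) := by
  rw [Dmat_eq_bordered, Cmat_eq_bordered, bordered_mul_bordered, mul_one]

end Unitary

section EulerDecomposition

theorem existsUnique_euler_two {W : Matrix (Fin 2) (Fin 2) ℂ} (hW : W ∈ unitaryGroup (Fin 2) ℂ) :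
    ∃! p : ℝ × ℝ × Circle × Circle, let (x, y, f, g) := p
      IsEulerPair x y ∧ W = bordered (f : ℂ) !![(g : ℂ)] * phaseRot x y := by
  have hnorm := sum_norm_sq_of_mem_unitaryGroup hW 0
  rw [Fin.sum_univ_two] at hnorm
  obtain ⟨⟨x, y, f⟩, ⟨hxy, hrow⟩, hrow_unique⟩ := existsUnique_isEulerPair_smul_phaseRot_zero hnorm
  have eta : ![W 0 0, W 0 1] = W 0 := FinVec.etaExpand_eq (W 0)
  rw [eta] at hrow
  obtain ⟨V, ⟨hV, hWV⟩, hV_unique⟩ := existsUnique_eq_bordered_mul (circle_mem_unitary f) hW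
    (phaseRot_mem_unitaryGroup x y) hrow
  obtain ⟨g, rfl, hg_unique⟩ := existsUnique_circle_eq_of_mem_unitaryGroup hV
  refine ⟨(x, y, f, g), ⟨hxy, hWV⟩, ?_⟩
  rintro ⟨x', y', f', g'⟩ ⟨hxy', hWV'⟩
  cases hrow_unique (x', y', f') ⟨hxy', by rw [eta, hWV', bordered_mul_zero]⟩
  rw [hg_unique g' (hV_unique _ ⟨fin_one_circle_mem_unitaryGroup g', hWV'⟩).symm]

theorem existsUnique_euler_three {U : Matrix (Fin 3) (Fin 3) ℂ} (hU : U ∈ unitaryGroup (Fin 3) ℂ) :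
    ∃! p : (ℝ × ℝ × ℝ × ℝ × Circle) × (ℝ × ℝ × Circle × Circle),
      let ((δ₁, δ₂, δ₃, δ₄, ω), (δ₅, δ₆, f, g)) := p
      IsEulerRow δ₁ δ₂ δ₃ δ₄ ∧ IsEulerPair δ₅ δ₆ ∧
        U = bordered (ω : ℂ) (bordered (f : ℂ) !![(g : ℂ)] * phaseRot δ₅ δ₆) *
          (Bmat δ₄ * Amat δ₁ δ₂ δ₃) := by
  have hnorm := sum_norm_sq_of_mem_unitaryGroup hU 0
  rw [Fin.sum_univ_three] at hnorm
  obtain ⟨⟨δ₁, δ₂, δ₃, δ₄, ω⟩, ⟨hδ, hrow⟩, hrow_unique⟩ := existsUnique_isEulerRow hnorm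
  have eta : ![U 0 0, U 0 1, U 0 2] = U 0 := FinVec.etaExpand_eq (U 0)
  rw [eta] at hrow
  obtain ⟨V, ⟨hV, hUV⟩, hV_unique⟩ := existsUnique_eq_bordered_mul (circle_mem_unitary ω) hU
    (mul_mem (Bmat_mem_unitaryGroup δ₄) (Amat_mem_unitaryGroup δ₁ δ₂ δ₃)) hrow
  obtain ⟨⟨δ₅, δ₆, f, g⟩, ⟨hpair, rfl⟩, hpair_unique⟩ := existsUnique_euler_two hV
  refine ⟨((δ₁, δ₂, δ₃, δ₄, ω), δ₅, δ₆, f, g), ⟨hδ, hpair, hUV⟩, ?_⟩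
  rintro ⟨⟨δ₁', δ₂', δ₃', δ₄', ω'⟩, δ₅', δ₆', f', g'⟩ ⟨hδ', hpair', hUV'⟩
  cases hrow_unique (δ₁', δ₂', δ₃', δ₄', ω') ⟨hδ', by rw [eta, hUV', bordered_mul_zero]⟩
  have hV' : bordered (f' : ℂ) !![(g' : ℂ)] * phaseRot δ₅' δ₆' ∈ unitaryGroup (Fin 2) ℂ :=
    mul_mem ((bordered_mem_unitaryGroup_iff (circle_mem_unitary f')).mpr
      (fin_one_circle_mem_unitaryGroup g')) (phaseRot_mem_unitaryGroup δ₅' δ₆')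
  rw [hpair_unique (δ₅', δ₆', f', g') ⟨hpair', (hV_unique _ ⟨hV', hUV'⟩).symm⟩]

theorem existsUnique_circleExp_triple (ω f g : Circle) :
    ∃! p : ℝ × ℝ × ℝ, let (δ₇, δ₈, δ₉) := p
      (δ₇ ∈ Set.Ico 0 (2 * Real.pi) ∧ δ₈ ∈ Set.Ico 0 (2 * Real.pi) ∧
        δ₉ ∈ Set.Ico 0 (2 * Real.pi)) ∧
      Circle.exp δ₉ = ω ∧ Circle.exp (δ₇ + δ₈ + δ₉) = f ∧ Circle.exp δ₈ = g := by
  obtain ⟨δ₈, ⟨h₈, rfl⟩, h₈_unique⟩ := existsUnique_circleExp_eq g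
  obtain ⟨δ₉, ⟨h₉, rfl⟩, h₉_unique⟩ := existsUnique_circleExp_eq ω
  obtain ⟨δ₇, ⟨h₇, hf⟩, h₇_unique⟩ :=
    existsUnique_circleExp_eq (f / (Circle.exp δ₈ * Circle.exp δ₉))
  refine ⟨(δ₇, δ₈, δ₉), ⟨⟨h₇, h₈, h₉⟩, rfl, ?_, rfl⟩, ?_⟩
  · rw [add_assoc, Circle.exp_add, Circle.exp_add, hf, div_mul_cancel]
  · rintro ⟨δ₇', δ₈', δ₉'⟩ ⟨⟨h₇', h₈', h₉'⟩, hω, hf', hg⟩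
    obtain rfl := h₈_unique δ₈' ⟨h₈', hg⟩
    obtain rfl := h₉_unique δ₉' ⟨h₉', hω⟩
    rw [h₇_unique δ₇' ⟨h₇', by rw [← hf', add_assoc, Circle.exp_add, Circle.exp_add,
      mul_div_cancel_right]⟩]

end EulerDecomposition

/-- Every 3×3 unitary admits a unique decomposition
`U = D(δ₇,δ₈,δ₉) · C(δ₅,δ₆) · B(δ₄) · A(δ₁,δ₂,δ₃)` with the angle conditions of
Figure 3 of the paper (soundness and uniqueness of axiom (r), Proposition 15). -/
theorem euler_decomposition_3x3 (U : Matrix (Fin 3) (Fin 3) ℂ)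
    (hU : U ∈ Matrix.unitaryGroup (Fin 3) ℂ) :
    ∃! δ : ℝ × ℝ × ℝ × ℝ × ℝ × ℝ × ℝ × ℝ × ℝ, match δ with
      | (δ₁, δ₂, δ₃, δ₄, δ₅, δ₆, δ₇, δ₈, δ₉) =>
        δ₁ ∈ Set.Ico 0 Real.pi ∧ δ₂ ∈ Set.Ico 0 Real.pi ∧ δ₅ ∈ Set.Ico 0 Real.pi ∧
        δ₃ ∈ Set.Ico 0 (2 * Real.pi) ∧ δ₄ ∈ Set.Ico 0 (2 * Real.pi) ∧
        δ₆ ∈ Set.Ico 0 (2 * Real.pi) ∧ δ₇ ∈ Set.Ico 0 (2 * Real.pi) ∧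
        δ₈ ∈ Set.Ico 0 (2 * Real.pi) ∧ δ₉ ∈ Set.Ico 0 (2 * Real.pi) ∧
        (δ₃ = 0 → δ₂ = 0) ∧
        (δ₃ = Real.pi → δ₁ = 0) ∧
        (δ₄ = 0 → δ₁ = 0 ∧ δ₂ = 0 ∧ δ₃ = 0) ∧
        (δ₄ = Real.pi → δ₂ = 0) ∧
        (δ₄ = Real.pi → δ₃ = 0 → δ₁ = 0) ∧
        ((δ₆ = 0 ∨ δ₆ = Real.pi) → δ₅ = 0) ∧
        U = Dmat δ₇ δ₈ δ₉ * Cmat δ₅ δ₆ * Bmat δ₄ * Amat δ₁ δ₂ δ₃ := by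
  obtain ⟨⟨⟨δ₁, δ₂, δ₃, δ₄, ω⟩, δ₅, δ₆, f, g⟩, ⟨hrow, hpair, hU_eq⟩, hunique⟩ :=
    existsUnique_euler_three hU
  obtain ⟨⟨δ₇, δ₈, δ₉⟩, ⟨⟨h₇, h₈, h₉⟩, rfl, rfl, rfl⟩, hphase_unique⟩ :=
    existsUnique_circleExp_triple ω f g
  refine ⟨(δ₁, δ₂, δ₃, δ₄, δ₅, δ₆, δ₇, δ₈, δ₉), ?_, ?_⟩
  · obtain ⟨h₁, h₂, h₃, h₄, hside⟩ := isEulerRow_iff.mp hrow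
    rw [← Dmat_mul_Cmat, ← mul_assoc] at hU_eq
    obtain ⟨h₅, h₆, hside₅⟩ := hpair
    tauto
  · rintro ⟨δ₁', δ₂', δ₃', δ₄', δ₅', δ₆', δ₇', δ₈', δ₉'⟩
      ⟨h₁, h₂, h₅, h₃, h₄, h₆, h₇', h₈', h₉', c₁, c₂, c₃, c₄, c₅, c₆, hU_eq'⟩
    rw [Dmat_mul_Cmat, mul_assoc] at hU_eq'
    have heq := hunique ((δ₁', δ₂', δ₃', δ₄', Circle.exp δ₉'), δ₅', δ₆',
      Circle.exp (δ₇' + δ₈' + δ₉'), Circle.exp δ₈')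
      ⟨isEulerRow_iff.mpr ⟨h₁, h₂, h₃, h₄, c₁, c₂, c₃, c₄, c₅⟩, ⟨h₅, h₆, c₆⟩, hU_eq'⟩
    simp only [Prod.mk.injEq] at heq
    obtain ⟨⟨rfl, rfl, rfl, rfl, hω⟩, rfl, rfl, hf, hg⟩ := heq
    rw [hphase_unique (δ₇', δ₈', δ₉') ⟨⟨h₇', h₈', h₉'⟩, hω, hf, hg⟩]

end
end

section
/- For all real numbers γ₁, γ₂, γ₃, γ₄ there exists a unique 9-tuple of real numbers (δ₁, …, δ₉) with δ₁, …, δ₆ ∈ [0, π), δ₇, δ₈, δ₉ ∈ [0, 2π), δ₁ = 0 whenever δ₃ ∈ {0, π/2}, δ₂ = 0 whenever δ₄ ∈ {0, π/2}, δ₃ = 0 whenever δ₄ = 0, and δ₅ = 0 whenever δ₆ ∈ {0, π/2}, such that B₁(γ₄) · B₂(γ₃) · Φ₁(γ₂) · B₁(γ₁) = Φ₃(δ₉) · Φ₂(δ₈) · Φ₁(δ₇) · B₂(δ₆) · Φ₂(δ₅) · B₁(δ₄) · B₂(δ₃) · Φ₁(δ₂) · Φ₂(δ₁). (This is the existence and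 uniqueness of the parameters in the three-mode linear-optical Euler axiom (G) of the paper.) -/
open Matrix Complex

noncomputable section

/-- Beam splitter on modes 1 and 2. -/
def B1mat (θ : ℝ) : Matrix (Fin 3) (Fin 3) ℂ :=
  !![(Real.cos θ : ℂ), Complex.I * (Real.sin θ : ℂ), 0;
     Complex.I * (Real.sin θ : ℂ), (Real.cos θ : ℂ), 0;
     0, 0, 1]

/-- Beam splitter on modes 2 and 3. -/
def B2mat (θ : ℝ) : Matrix (Fin 3) (Fin 3) ℂ :=
  !![1, 0, 0;
     0, (Real.cos θ : ℂ), Complex.I * (Real.sin θ : ℂ);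
     0, Complex.I * (Real.sin θ : ℂ), (Real.cos θ : ℂ)]

/-- Phase shifter on mode 1. -/
def Phi1mat (φ : ℝ) : Matrix (Fin 3) (Fin 3) ℂ :=
  !![Complex.exp (φ * Complex.I), 0, 0; 0, 1, 0; 0, 0, 1]

/-- Phase shifter on mode 2. -/
def Phi2mat (φ : ℝ) : Matrix (Fin 3) (Fin 3) ℂ :=
  !![1, 0, 0; 0, Complex.exp (φ * Complex.I), 0; 0, 0, 1]

/-- Phase shifter on mode 3. -/
def Phi3mat (φ : ℝ) : Matrix (Fin 3) (Fin 3) ℂ :=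
  !![1, 0, 0; 0, 1, 0; 0, 0, Complex.exp (φ * Complex.I)]

/-!
Commuting `Φ₁(δ₂)` past `B₂(δ₃)` turns the right-hand side into `D * G₂₃ * G₁₂ * G₂₃'`, where `D`
is a diagonal matrix of phases and each `G` is a phase shift followed by a beam splitter. A vector
of `ℂ²` is, in exactly one way, a multiple of a row `(cos θ · exp (iα), i sin θ)` with reduced
angles: away from `θ = 0`, the affine coordinate of the line it spans is `cot θ · exp (iα)` up to a
constant, and `(cot θ, α)` are signed polar coordinates. Applied twice to the first row of a unitary
matrix, this determines `G₁₂` and `G₂₃'`; the first row of what remains is a multiple of a basis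
vector, and applied to its second row, the same fact determines `G₂₃`. The last factor is then
unitary and triangular, hence a diagonal matrix of phases.
-/

open scoped Real

theorem injOn_cexp_mul_I_Ico : Set.InjOn (fun φ : ℝ => cexp (φ * I)) (Set.Ico 0 (2 * π)) :=
  fun _ hφ _ hψ h => Circle.exp_injOn_Ico (sub_zero (2 * π)).le hφ hψ (Circle.ext h)

theorem exists_mem_Ico_cexp_mul_I_eq {z : ℂ} (hz : ‖z‖ = 1) :
    ∃ φ ∈ Set.Ico 0 (2 * π), cexp ((φ : ℝ) * I) = z := by
  obtain ⟨ψ, rfl⟩ := (norm_eq_one_iff z).mp hz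
  obtain ⟨φ, hφ, h⟩ := Circle.periodic_exp.exists_mem_Ico₀ Real.two_pi_pos ψ
  exact ⟨φ, hφ, congrArg Subtype.val h.symm⟩

theorem exists_real_mul_cexp_eq (z : ℂ) :
    ∃ x α : ℝ, α ∈ Set.Ico 0 π ∧ (x = 0 → α = 0) ∧ x * cexp (α * I) = z := by
  rcases eq_or_ne z 0 with rfl | hz
  · exact ⟨0, 0, ⟨le_rfl, Real.pi_pos⟩, fun _ => rfl, by simp⟩
  have hnorm : (‖z‖ : ℂ) ≠ 0 := by exact_mod_cast norm_ne_zero_iff.mpr hz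
  -- Halving the argument of `z ^ 2` determines `z` up to a sign, which the radius absorbs.
  obtain ⟨φ, hφ, hφz⟩ := exists_mem_Ico_cexp_mul_I_eq (z := (z / ‖z‖) ^ 2) (by simp [hz])
  have hα : φ / 2 ∈ Set.Ico 0 π := ⟨by linarith [hφ.1], by linarith [hφ.2]⟩
  have hexp : cexp ((φ / 2 : ℝ) * I) ^ 2 = cexp (φ * I) := by
    rw [← Complex.exp_nat_mul]; push_cast; ring_nf
  have hsq : (‖z‖ * cexp ((φ / 2 : ℝ) * I)) ^ 2 = z ^ 2 := by
    rw [mul_pow, hexp, hφz]; field_simp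
  rcases sq_eq_sq_iff_eq_or_eq_neg.mp hsq with h | h
  · exact ⟨‖z‖, φ / 2, hα, fun h0 => absurd h0 (norm_ne_zero_iff.mpr hz), h⟩
  · refine ⟨-‖z‖, φ / 2, hα, fun h0 => absurd (neg_eq_zero.mp h0) (norm_ne_zero_iff.mpr hz), ?_⟩
    rw [ofReal_neg, neg_mul, h, neg_neg]

theorem real_mul_cexp_inj {x y α β : ℝ} (hα : α ∈ Set.Ico 0 π) (hβ : β ∈ Set.Ico 0 π)
    (hx : x = 0 → α = 0) (hy : y = 0 → β = 0)
    (h : x * cexp (α * I) = y * cexp (β * I)) : x = y ∧ α = β := by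
  have hsq : x ^ 2 = y ^ 2 := by
    have := congrArg norm h
    rwa [norm_mul, norm_mul, norm_exp_ofReal_mul_I, norm_exp_ofReal_mul_I, mul_one, mul_one,
      norm_real, norm_real, Real.norm_eq_abs, Real.norm_eq_abs, ← sq_eq_sq_iff_abs_eq_abs] at this
  rcases eq_or_ne x 0 with rfl | hx0
  · have hy0 : y = 0 := by simpa using hsq.symm
    exact ⟨hy0.symm, (hx rfl).trans (hy hy0).symm⟩
  have hexp : cexp ((2 * α : ℝ) * I) = cexp ((2 * β : ℝ) * I) := by
    have hdouble (t : ℝ) : cexp ((2 * t : ℝ) * I) = cexp (t * I) ^ 2 := by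
      rw [← Complex.exp_nat_mul]; push_cast; ring_nf
    have hsq' : (x : ℂ) ^ 2 = (y : ℂ) ^ 2 := by exact_mod_cast hsq
    rw [hdouble, hdouble]
    refine mul_left_cancel₀ (pow_ne_zero 2 (ofReal_ne_zero.mpr hx0)) ?_
    rw [← mul_pow, h, mul_pow, hsq']
  have hαβ : α = β := mul_left_cancel₀ two_ne_zero <| injOn_cexp_mul_I_Ico
    ⟨by linarith [hα.1], by linarith [hα.2]⟩ ⟨by linarith [hβ.1], by linarith [hβ.2]⟩ hexp
  subst hαβ
  exact ⟨ofReal_injective (mul_right_cancel₀ (Complex.exp_ne_zero _) h), rfl⟩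

theorem exists_cos_div_sin_eq (x : ℝ) : ∃ θ ∈ Set.Ioo 0 π, Real.cos θ / Real.sin θ = x := by
  refine ⟨π / 2 - Real.arctan x, ⟨by linarith [Real.arctan_lt_pi_div_two x],
    by linarith [Real.neg_pi_div_two_lt_arctan x]⟩, ?_⟩
  rw [Real.cos_pi_div_two_sub, Real.sin_pi_div_two_sub, ← Real.tan_eq_sin_div_cos,
    Real.tan_arctan]

theorem injOn_cos_div_sin_Ioo :
    Set.InjOn (fun θ : ℝ => Real.cos θ / Real.sin θ) (Set.Ioo 0 π) := by
  intro θ hθ η hη h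
  have htan (t : ℝ) : Real.cos t / Real.sin t = Real.tan (π / 2 - t) := by
    rw [Real.tan_pi_div_two_sub, Real.tan_eq_sin_div_cos, inv_div]
  have := Real.injOn_tan ⟨by linarith [hθ.2], by linarith [hθ.1]⟩
    ⟨by linarith [hη.2], by linarith [hη.1]⟩ ((htan θ).symm.trans (h.trans (htan η)))
  linarith

/-- The normal form of the angle `θ` of a beam splitter and the angle `α` of the phase shifter
preceding it. -/
structure IsReducedAngles (θ α : ℝ) : Prop where
  angle_mem : θ ∈ Set.Ico 0 π
  phase_mem : α ∈ Set.Ico 0 π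
  phase_eq_zero : θ = 0 ∨ θ = π / 2 → α = 0

theorem isReducedAngles_zero : IsReducedAngles 0 0 :=
  ⟨⟨le_rfl, Real.pi_pos⟩, ⟨le_rfl, Real.pi_pos⟩, fun _ => rfl⟩

namespace IsReducedAngles

variable {θ α : ℝ}

theorem angle_mem_Ioo (h : IsReducedAngles θ α) (hθ : θ ≠ 0) : θ ∈ Set.Ioo 0 π :=
  ⟨h.angle_mem.1.lt_of_ne' hθ, h.angle_mem.2⟩

theorem sin_eq_zero_iff (h : IsReducedAngles θ α) : Real.sin θ = 0 ↔ θ = 0 :=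
  Real.sin_eq_zero_iff_of_lt_of_lt (by linarith [h.angle_mem.1, Real.pi_pos]) h.angle_mem.2

theorem phase_eq_zero_of_cos_div_sin_eq_zero (h : IsReducedAngles θ α)
    (h0 : Real.cos θ / Real.sin θ = 0) : α = 0 := by
  refine h.phase_eq_zero ((div_eq_zero_iff.mp h0).symm.imp h.sin_eq_zero_iff.mp fun hcos => ?_)
  refine Real.injOn_cos ⟨h.angle_mem.1, h.angle_mem.2.le⟩ ?_ (hcos.trans Real.cos_pi_div_two.symm)
  constructor <;> linarith [Real.pi_pos]

end IsReducedAngles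

/-- The first row of the two-mode unitary of a phase shift `α` on the first mode followed by a beam
splitter of angle `θ`. -/
def gateRow (θ α : ℝ) : Fin 2 → ℂ :=
  ![(Real.cos θ : ℂ) * cexp (α * I), I * (Real.sin θ : ℂ)]

theorem exists_smul_gateRow_eq (v : Fin 2 → ℂ) :
    ∃ (q : ℂ) (θ α : ℝ), IsReducedAngles θ α ∧ (q = 0 → θ = 0) ∧ q • gateRow θ α = v := by
  rcases eq_or_ne (v 1) 0 with hv | hv
  · refine ⟨v 0, 0, 0, isReducedAngles_zero, fun _ => rfl, ?_⟩
    ext i; fin_cases i <;> simp [gateRow, hv]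
  obtain ⟨x, α, hα, hx, hpolar⟩ := exists_real_mul_cexp_eq (I * v 0 / v 1)
  obtain ⟨θ, hθ, rfl⟩ := exists_cos_div_sin_eq x
  have hsin : (Real.sin θ : ℂ) ≠ 0 := ofReal_ne_zero.mpr (Real.sin_pos_of_mem_Ioo hθ).ne'
  refine ⟨v 1 / (I * Real.sin θ), θ, α, ⟨⟨hθ.1.le, hθ.2⟩, hα, ?_⟩, ?_, ?_⟩
  · rintro (h | rfl)
    · exact absurd h hθ.1.ne'
    · exact hx (by rw [Real.cos_pi_div_two, zero_div])
  · exact fun h => absurd h (div_ne_zero hv (mul_ne_zero I_ne_zero hsin))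
  · have hcos : (Real.cos θ : ℂ) * cexp (α * I) = I * v 0 / v 1 * Real.sin θ := by
      rw [← hpolar, ofReal_div]; field_simp
    ext i; fin_cases i
    · change v 1 / (I * Real.sin θ) * ((Real.cos θ : ℂ) * cexp (α * I)) = v 0
      rw [hcos]; field_simp
    · change v 1 / (I * Real.sin θ) * (I * Real.sin θ) = v 1
      field_simp

theorem smul_gateRow_apply_one_eq_zero_iff {q : ℂ} {θ α : ℝ} (h : IsReducedAngles θ α)
    (hq : q = 0 → θ = 0) : (q • gateRow θ α) 1 = 0 ↔ θ = 0 := by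
  change q * (I * Real.sin θ) = 0 ↔ θ = 0
  rw [mul_eq_zero, mul_eq_zero_iff_left I_ne_zero, ofReal_eq_zero, h.sin_eq_zero_iff,
    or_iff_right_of_imp hq]

theorem smul_gateRow_inj {q q' : ℂ} {θ α θ' α' : ℝ} (h : IsReducedAngles θ α)
    (h' : IsReducedAngles θ' α') (hq : q = 0 → θ = 0) (hq' : q' = 0 → θ' = 0)
    (heq : q • gateRow θ α = q' • gateRow θ' α') : q = q' ∧ θ = θ' ∧ α = α' := by
  have hfst : q * ((Real.cos θ : ℂ) * cexp (α * I)) =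
    q' * ((Real.cos θ' : ℂ) * cexp (α' * I)) := congrFun heq 0
  have hsnd : q * Real.sin θ = q' * Real.sin θ' := by
    have : q * (I * Real.sin θ) = q' * (I * Real.sin θ') := congrFun heq 1
    exact mul_left_cancel₀ I_ne_zero (by linear_combination this)
  have hzero : θ = 0 ↔ θ' = 0 := by
    rw [← smul_gateRow_apply_one_eq_zero_iff h hq, heq, smul_gateRow_apply_one_eq_zero_iff h' hq']
  by_cases hθ : θ = 0
  · obtain rfl := hθ
    obtain rfl := hzero.mp rfl
    obtain rfl := h.phase_eq_zero (Or.inl rfl)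
    obtain rfl := h'.phase_eq_zero (Or.inl rfl)
    exact ⟨by simpa using hfst, rfl, rfl⟩
  have hθ' : θ' ≠ 0 := mt hzero.mpr hθ
  have hsin : (Real.sin θ : ℂ) ≠ 0 := ofReal_ne_zero.mpr (mt h.sin_eq_zero_iff.mp hθ)
  have hsin' : (Real.sin θ' : ℂ) ≠ 0 := ofReal_ne_zero.mpr (mt h'.sin_eq_zero_iff.mp hθ')
  have hpolar : (Real.cos θ / Real.sin θ : ℝ) * cexp (α * I) =
      (Real.cos θ' / Real.sin θ' : ℝ) * cexp (α' * I) := by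
    refine mul_left_cancel₀ (mul_ne_zero (mt hq hθ) hsin) ?_
    calc q * Real.sin θ * ((Real.cos θ / Real.sin θ : ℝ) * cexp (α * I))
        = q * ((Real.cos θ : ℂ) * cexp (α * I)) := by rw [ofReal_div]; field_simp
      _ = q' * ((Real.cos θ' : ℂ) * cexp (α' * I)) := hfst
      _ = q' * Real.sin θ' * ((Real.cos θ' / Real.sin θ' : ℝ) * cexp (α' * I)) := by
          rw [ofReal_div]; field_simp
      _ = q * Real.sin θ * ((Real.cos θ' / Real.sin θ' : ℝ) * cexp (α' * I)) := by rw [hsnd]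
  obtain ⟨hcot, rfl⟩ := real_mul_cexp_inj h.phase_mem h'.phase_mem
    h.phase_eq_zero_of_cos_div_sin_eq_zero h'.phase_eq_zero_of_cos_div_sin_eq_zero hpolar
  obtain rfl := injOn_cos_div_sin_Ioo (h.angle_mem_Ioo hθ) (h'.angle_mem_Ioo hθ') hcot
  exact ⟨mul_right_cancel₀ hsin hsnd, rfl, rfl⟩

section UnitaryRows

variable {n 𝕜 : Type*} [Fintype n] [DecidableEq n]

theorem diagonal_mul_row [NonUnitalNonAssocSemiring 𝕜] (d : n → 𝕜) (M : Matrix n n 𝕜) (i : n) :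
    (diagonal d * M) i = d i • M i :=
  funext fun j => diagonal_mul d M i j

theorem mul_star_row_eq_smul_one_row [CommRing 𝕜] [StarRing 𝕜] {U R : Matrix n n 𝕜}
    (hR : R ∈ unitaryGroup n 𝕜) {i : n} {c : 𝕜} (h : U i = c • R i) :
    (U * star R) i = c • (1 : Matrix n n 𝕜) i := by
  rw [mul_apply_eq_vecMul, h, smul_vecMul, ← mul_apply_eq_vecMul, mem_unitaryGroup_iff.mp hR]

theorem smul_star_row_eq_one_row [CommRing 𝕜] [StarRing 𝕜] {W : Matrix n n 𝕜}
    (hW : W ∈ unitaryGroup n 𝕜) {i : n} {c : 𝕜} (h : W i = c • (1 : Matrix n n 𝕜) i) :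
    c • (star W) i = (1 : Matrix n n 𝕜) i := by
  rw [← mem_unitaryGroup_iff.mp hW, mul_apply_eq_vecMul, h, smul_vecMul, ← mul_apply_eq_vecMul,
    one_mul]

variable [RCLike 𝕜] {W : Matrix n n 𝕜} {i : n} {c : 𝕜}

theorem norm_eq_one_of_row_eq_smul_one_row (hW : W ∈ unitaryGroup n 𝕜)
    (h : W i = c • (1 : Matrix n n 𝕜) i) : ‖c‖ = 1 := by
  have hii : c * star (W i i) = 1 := by
    simpa using congrFun (smul_star_row_eq_one_row hW h) i
  rw [h] at hii
  have hsq : ‖c‖ ^ 2 = 1 := by simpa [sq] using congrArg norm hii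
  exact (pow_eq_one_iff_of_nonneg (norm_nonneg c) two_ne_zero).mp hsq

theorem apply_eq_zero_of_row_eq_smul_one_row (hW : W ∈ unitaryGroup n 𝕜)
    (h : W i = c • (1 : Matrix n n 𝕜) i) {j : n} (hj : j ≠ i) : W j i = 0 := by
  have hij : c * star (W j i) = 0 := by
    simpa [one_apply_ne hj.symm] using congrFun (smul_star_row_eq_one_row hW h) j
  have hc : c ≠ 0 := norm_ne_zero_iff.mp (by simp [norm_eq_one_of_row_eq_smul_one_row hW h])
  exact star_eq_zero.mp ((mul_eq_zero.mp hij).resolve_left hc)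

theorem norm_eq_one_of_diagonal_mem_unitaryGroup {d : n → 𝕜}
    (hd : diagonal d ∈ unitaryGroup n 𝕜) (i : n) : ‖d i‖ = 1 :=
  norm_eq_one_of_row_eq_smul_one_row hd (by simpa only [mul_one] using diagonal_mul_row d 1 i)

end UnitaryRows

theorem ofReal_cos_mul_self_add_ofReal_sin_mul_self (θ : ℝ) :
    (Real.cos θ : ℂ) * Real.cos θ + Real.sin θ * Real.sin θ = 1 := by
  rw [ofReal_cos, ofReal_sin, ← sq, ← sq, Complex.cos_sq_add_sin_sq]

theorem B1mat_mem_unitaryGroup (θ : ℝ) : B1mat θ ∈ unitaryGroup (Fin 3) ℂ := by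
  have hcos := ofReal_cos_mul_self_add_ofReal_sin_mul_self θ
  have hsin := (add_comm _ _).trans hcos
  rw [mem_unitaryGroup_iff]
  ext i j
  fin_cases i <;> fin_cases j <;>
    simp [B1mat, mul_apply, Fin.sum_univ_three, mul_mul_mul_comm I, mul_left_comm, mul_comm,
      hcos, hsin, -ofReal_cos, -ofReal_sin]

theorem B2mat_mem_unitaryGroup (θ : ℝ) : B2mat θ ∈ unitaryGroup (Fin 3) ℂ := by
  have hcos := ofReal_cos_mul_self_add_ofReal_sin_mul_self θ
  have hsin := (add_comm _ _).trans hcos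
  rw [mem_unitaryGroup_iff]
  ext i j
  fin_cases i <;> fin_cases j <;>
    simp [B2mat, mul_apply, Fin.sum_univ_three, mul_mul_mul_comm I, mul_left_comm, mul_comm,
      hcos, hsin, -ofReal_cos, -ofReal_sin]

theorem Phi1mat_mem_unitaryGroup (φ : ℝ) : Phi1mat φ ∈ unitaryGroup (Fin 3) ℂ := by
  rw [mem_unitaryGroup_iff]
  ext i j
  fin_cases i <;> fin_cases j <;>
    simp [Phi1mat, mul_apply, Fin.sum_univ_three, ← Complex.exp_conj, ← Complex.exp_add]

theorem Phi2mat_mem_unitaryGroup (φ : ℝ) : Phi2mat φ ∈ unitaryGroup (Fin 3) ℂ := by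
  rw [mem_unitaryGroup_iff]
  ext i j
  fin_cases i <;> fin_cases j <;>
    simp [Phi2mat, mul_apply, Fin.sum_univ_three, ← Complex.exp_conj, ← Complex.exp_add]

/-- The gate on modes 1 and 2: a phase shift `α` on mode 1 followed by a beam splitter of angle
`θ`. -/
def gate12 (θ α : ℝ) : Matrix (Fin 3) (Fin 3) ℂ := B1mat θ * Phi1mat α

/-- The gate on modes 2 and 3: a phase shift `α` on mode 2 followed by a beam splitter of angle
`θ`. -/
def gate23 (θ α : ℝ) : Matrix (Fin 3) (Fin 3) ℂ := B2mat θ * Phi2mat α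

theorem gate12_mem_unitaryGroup (θ α : ℝ) : gate12 θ α ∈ unitaryGroup (Fin 3) ℂ :=
  mul_mem (B1mat_mem_unitaryGroup θ) (Phi1mat_mem_unitaryGroup α)

theorem gate23_mem_unitaryGroup (θ α : ℝ) : gate23 θ α ∈ unitaryGroup (Fin 3) ℂ :=
  mul_mem (B2mat_mem_unitaryGroup θ) (Phi2mat_mem_unitaryGroup α)

theorem gate23_row_zero (θ α : ℝ) : gate23 θ α 0 = (1 : Matrix (Fin 3) (Fin 3) ℂ) 0 := by
  ext j
  fin_cases j <;> simp [gate23, B2mat, Phi2mat, mul_apply, one_apply, Fin.sum_univ_three]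

theorem gate23_row_one (θ α : ℝ) : gate23 θ α 1 = vecCons 0 (gateRow θ α) := by
  ext j
  fin_cases j <;> simp [gate23, gateRow, B2mat, Phi2mat, mul_apply, Fin.sum_univ_three]

theorem gate12_mul_gate23_row_zero (θ₂ α₂ θ₁ α₁ : ℝ) :
    (gate12 θ₂ α₂ * gate23 θ₁ α₁) 0 =
      vecCons (gateRow θ₂ α₂ 0) (gateRow θ₂ α₂ 1 • gateRow θ₁ α₁) := by
  ext j
  fin_cases j <;>
    simp [gate12, gate23, gateRow, B1mat, Phi1mat, B2mat, Phi2mat, mul_apply, Fin.sum_univ_three]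

theorem gate23_mul_row_zero (θ α : ℝ) (M : Matrix (Fin 3) (Fin 3) ℂ) :
    (gate23 θ α * M) 0 = M 0 := by
  rw [mul_apply_eq_vecMul, gate23_row_zero, ← mul_apply_eq_vecMul, one_mul]

theorem exists_smul_gate12_mul_gate23_row_zero_eq (v : Fin 3 → ℂ) :
    ∃ (p : ℂ) (θ₁ α₁ θ₂ α₂ : ℝ), IsReducedAngles θ₁ α₁ ∧ IsReducedAngles θ₂ α₂ ∧
      (θ₂ = 0 → θ₁ = 0) ∧ p • (gate12 θ₂ α₂ * gate23 θ₁ α₁) 0 = v := by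
  obtain ⟨q, θ₁, α₁, h₁, hq, hv⟩ := exists_smul_gateRow_eq (vecTail v)
  obtain ⟨p, θ₂, α₂, h₂, -, hp⟩ := exists_smul_gateRow_eq ![v 0, q]
  have hp0 : p * gateRow θ₂ α₂ 0 = v 0 := congrFun hp 0
  have hp1 : p * gateRow θ₂ α₂ 1 = q := congrFun hp 1
  refine ⟨p, θ₁, α₁, θ₂, α₂, h₁, h₂, ?_, ?_⟩
  · rintro rfl
    exact hq (by simp [← hp1, gateRow])
  · rw [gate12_mul_gate23_row_zero, smul_cons, smul_smul, smul_eq_mul, hp0, hp1, hv]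
    exact cons_head_tail v

theorem smul_gate12_mul_gate23_row_zero_inj {p p' : ℂ} {θ₁ α₁ θ₂ α₂ θ₁' α₁' θ₂' α₂' : ℝ}
    (hp : p ≠ 0) (hp' : p' ≠ 0)
    (h₁ : IsReducedAngles θ₁ α₁) (h₂ : IsReducedAngles θ₂ α₂) (h₂₁ : θ₂ = 0 → θ₁ = 0)
    (h₁' : IsReducedAngles θ₁' α₁') (h₂' : IsReducedAngles θ₂' α₂') (h₂₁' : θ₂' = 0 → θ₁' = 0)
    (heq : p • (gate12 θ₂ α₂ * gate23 θ₁ α₁) 0 = p' • (gate12 θ₂' α₂' * gate23 θ₁' α₁') 0) :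
    p = p' ∧ (θ₁ = θ₁' ∧ α₁ = α₁') ∧ θ₂ = θ₂' ∧ α₂ = α₂' := by
  rw [gate12_mul_gate23_row_zero, gate12_mul_gate23_row_zero, smul_cons, smul_cons, smul_smul,
    smul_smul, vecCons_inj] at heq
  obtain ⟨hhead, htail⟩ := heq
  obtain ⟨hq, hangles₁⟩ := smul_gateRow_inj h₁ h₁'
    (h₂₁ ∘ (smul_gateRow_apply_one_eq_zero_iff h₂ (absurd · hp)).mp)
    (h₂₁' ∘ (smul_gateRow_apply_one_eq_zero_iff h₂' (absurd · hp')).mp) htail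
  have hrow : p • gateRow θ₂ α₂ = p' • gateRow θ₂' α₂' := by
    ext j
    fin_cases j
    exacts [hhead, hq]
  obtain ⟨hpp', hangles₂⟩ := smul_gateRow_inj h₂ h₂' (absurd · hp) (absurd · hp') hrow
  exact ⟨hpp', hangles₁, hangles₂⟩

theorem exists_diagonal_mul_gate23_eq {V : Matrix (Fin 3) (Fin 3) ℂ}
    (hV : V ∈ unitaryGroup (Fin 3) ℂ) {p : ℂ} (hrow : V 0 = p • (1 : Matrix (Fin 3) (Fin 3) ℂ) 0) :
    ∃ (d : Fin 3 → ℂ) (θ α : ℝ), (∀ i, ‖d i‖ = 1) ∧ IsReducedAngles θ α ∧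
      diagonal d * gate23 θ α = V := by
  obtain ⟨q, θ, α, h, -, hq⟩ := exists_smul_gateRow_eq (vecTail (V 1))
  have hG := gate23_mem_unitaryGroup θ α
  have hV1 : V 1 = q • gate23 θ α 1 := by
    have hV10 : V 1 0 = 0 := apply_eq_zero_of_row_eq_smul_one_row hV hrow one_ne_zero
    rw [gate23_row_one, smul_cons, hq, smul_zero, ← hV10]
    exact (cons_head_tail (V 1)).symm
  set W := V * star (gate23 θ α) with hWdef
  have hW : W ∈ unitaryGroup (Fin 3) ℂ := mul_mem hV (Unitary.star_mem hG)
  have hW0 : W 0 = p • (1 : Matrix (Fin 3) (Fin 3) ℂ) 0 :=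
    mul_star_row_eq_smul_one_row hG (hrow.trans (by rw [gate23_row_zero]))
  have hW1 : W 1 = q • (1 : Matrix (Fin 3) (Fin 3) ℂ) 1 := mul_star_row_eq_smul_one_row hG hV1
  have hW20 : W 2 0 = 0 := apply_eq_zero_of_row_eq_smul_one_row hW hW0 (by decide)
  have hW21 : W 2 1 = 0 := apply_eq_zero_of_row_eq_smul_one_row hW hW1 (by decide)
  have hdiag : diagonal ![p, q, W 2 2] = W := by
    ext i j
    fin_cases i <;> fin_cases j <;> simp [hW0, hW1, hW20, hW21]
  refine ⟨![p, q, W 2 2], θ, α, norm_eq_one_of_diagonal_mem_unitaryGroup (hdiag ▸ hW), h, ?_⟩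
  rw [hdiag, hWdef, mul_assoc, mem_unitaryGroup_iff'.mp hG, mul_one]

theorem exists_diagonal_mul_gates_eq {U : Matrix (Fin 3) (Fin 3) ℂ}
    (hU : U ∈ unitaryGroup (Fin 3) ℂ) :
    ∃ (d : Fin 3 → ℂ) (θ₁ α₁ θ₂ α₂ θ₃ α₃ : ℝ), (∀ i, ‖d i‖ = 1) ∧
      IsReducedAngles θ₁ α₁ ∧ IsReducedAngles θ₂ α₂ ∧ IsReducedAngles θ₃ α₃ ∧
      (θ₂ = 0 → θ₁ = 0) ∧
      diagonal d * gate23 θ₃ α₃ * (gate12 θ₂ α₂ * gate23 θ₁ α₁) = U := by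
  obtain ⟨p, θ₁, α₁, θ₂, α₂, h₁, h₂, h₂₁, hrow⟩ := exists_smul_gate12_mul_gate23_row_zero_eq (U 0)
  have hR := mul_mem (gate12_mem_unitaryGroup θ₂ α₂) (gate23_mem_unitaryGroup θ₁ α₁)
  have hV := mul_mem hU (Unitary.star_mem hR)
  obtain ⟨d, θ₃, α₃, hd, h₃, heq⟩ :=
    exists_diagonal_mul_gate23_eq hV (mul_star_row_eq_smul_one_row hR hrow.symm)
  refine ⟨d, θ₁, α₁, θ₂, α₂, θ₃, α₃, hd, h₁, h₂, h₃, h₂₁, ?_⟩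
  rw [heq, mul_assoc, mem_unitaryGroup_iff'.mp hR, mul_one]

theorem diagonal_mul_gates_inj {d d' : Fin 3 → ℂ}
    {θ₁ α₁ θ₂ α₂ θ₃ α₃ θ₁' α₁' θ₂' α₂' θ₃' α₃' : ℝ} (hd : ∀ i, d i ≠ 0) (hd' : ∀ i, d' i ≠ 0)
    (h₁ : IsReducedAngles θ₁ α₁) (h₂ : IsReducedAngles θ₂ α₂) (h₃ : IsReducedAngles θ₃ α₃)
    (h₂₁ : θ₂ = 0 → θ₁ = 0)
    (h₁' : IsReducedAngles θ₁' α₁') (h₂' : IsReducedAngles θ₂' α₂') (h₃' : IsReducedAngles θ₃' α₃')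
    (h₂₁' : θ₂' = 0 → θ₁' = 0)
    (heq : diagonal d * gate23 θ₃ α₃ * (gate12 θ₂ α₂ * gate23 θ₁ α₁) =
      diagonal d' * gate23 θ₃' α₃' * (gate12 θ₂' α₂' * gate23 θ₁' α₁')) :
    d = d' ∧ (θ₁ = θ₁' ∧ α₁ = α₁') ∧ (θ₂ = θ₂' ∧ α₂ = α₂') ∧ θ₃ = θ₃' ∧ α₃ = α₃' := by
  have hrow₀ := congrFun heq 0
  rw [mul_assoc, mul_assoc, diagonal_mul_row, diagonal_mul_row, gate23_mul_row_zero,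
    gate23_mul_row_zero] at hrow₀
  obtain ⟨-, ⟨rfl, rfl⟩, rfl, rfl⟩ :=
    smul_gate12_mul_gate23_row_zero_inj (hd 0) (hd' 0) h₁ h₂ h₂₁ h₁' h₂' h₂₁' hrow₀
  have hR := mul_mem (gate12_mem_unitaryGroup θ₂ α₂) (gate23_mem_unitaryGroup θ₁ α₁)
  have hleft := (Unitary.isUnit_coe (U := ⟨_, hR⟩)).mul_right_cancel heq
  have hrow₁ := congrFun hleft 1
  rw [diagonal_mul_row, diagonal_mul_row, gate23_row_one, gate23_row_one, smul_cons, smul_cons,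
    vecCons_inj] at hrow₁
  obtain ⟨-, rfl, rfl⟩ :=
    smul_gateRow_inj h₃ h₃' (absurd · (hd 1)) (absurd · (hd' 1)) hrow₁.2
  have hG := gate23_mem_unitaryGroup θ₃ α₃
  have hdiag := (Unitary.isUnit_coe (U := ⟨_, hG⟩)).mul_right_cancel hleft
  exact ⟨diagonal_injective hdiag, ⟨rfl, rfl⟩, ⟨rfl, rfl⟩, rfl, rfl⟩

theorem commute_Phi1mat_B2mat (φ θ : ℝ) : Commute (Phi1mat φ) (B2mat θ) := by
  ext i j
  fin_cases i <;> fin_cases j <;> simp [Phi1mat, B2mat, mul_apply, Fin.sum_univ_three]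

theorem Phi3mat_mul_Phi2mat_mul_Phi1mat (φ : Fin 3 → ℝ) :
    Phi3mat (φ 2) * Phi2mat (φ 1) * Phi1mat (φ 0) = diagonal fun i => cexp (φ i * I) := by
  ext i j
  fin_cases i <;> fin_cases j <;>
    simp [Phi1mat, Phi2mat, Phi3mat, mul_apply, Fin.sum_univ_three]

theorem eulerProduct_eq_diagonal_mul_gates (φ : Fin 3 → ℝ) (θ₁ α₁ θ₂ α₂ θ₃ α₃ : ℝ) :
    Phi3mat (φ 2) * Phi2mat (φ 1) * Phi1mat (φ 0) * B2mat θ₃ * Phi2mat α₃ *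
        B1mat θ₂ * B2mat θ₁ * Phi1mat α₂ * Phi2mat α₁ =
      diagonal (fun i => cexp (φ i * I)) * gate23 θ₃ α₃ * (gate12 θ₂ α₂ * gate23 θ₁ α₁) := by
  simp only [← Phi3mat_mul_Phi2mat_mul_Phi1mat, gate12, gate23, mul_assoc]
  rw [← mul_assoc (Phi1mat α₂) (B2mat θ₁), (commute_Phi1mat_B2mat α₂ θ₁).eq, mul_assoc]

/-- The factorizations of a three-mode unitary `U` on the right-hand side of the Euler axiom (G), in
normal form. The conditions are spelled out in the order of the axiom; they say that `(δ₃, δ₁)`,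
`(δ₄, δ₂)` and `(δ₆, δ₅)` are reduced, together with the link between `δ₄` and `δ₃`. -/
def IsEulerDecomposition (U : Matrix (Fin 3) (Fin 3) ℂ) (δ₁ δ₂ δ₃ δ₄ δ₅ δ₆ δ₇ δ₈ δ₉ : ℝ) : Prop :=
  δ₁ ∈ Set.Ico 0 π ∧ δ₂ ∈ Set.Ico 0 π ∧ δ₃ ∈ Set.Ico 0 π ∧
  δ₄ ∈ Set.Ico 0 π ∧ δ₅ ∈ Set.Ico 0 π ∧ δ₆ ∈ Set.Ico 0 π ∧
  δ₇ ∈ Set.Ico 0 (2 * π) ∧ δ₈ ∈ Set.Ico 0 (2 * π) ∧ δ₉ ∈ Set.Ico 0 (2 * π) ∧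
  ((δ₃ = 0 ∨ δ₃ = π / 2) → δ₁ = 0) ∧ ((δ₄ = 0 ∨ δ₄ = π / 2) → δ₂ = 0) ∧
  (δ₄ = 0 → δ₃ = 0) ∧ ((δ₆ = 0 ∨ δ₆ = π / 2) → δ₅ = 0) ∧
  U = Phi3mat δ₉ * Phi2mat δ₈ * Phi1mat δ₇ * B2mat δ₆ * Phi2mat δ₅ *
    B1mat δ₄ * B2mat δ₃ * Phi1mat δ₂ * Phi2mat δ₁

theorem lopp_euler_3mode_general {U : Matrix (Fin 3) (Fin 3) ℂ}
    (hU : U ∈ unitaryGroup (Fin 3) ℂ) :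
    ∃! δ : ℝ × ℝ × ℝ × ℝ × ℝ × ℝ × ℝ × ℝ × ℝ,
      IsEulerDecomposition U δ.1 δ.2.1 δ.2.2.1 δ.2.2.2.1 δ.2.2.2.2.1 δ.2.2.2.2.2.1
        δ.2.2.2.2.2.2.1 δ.2.2.2.2.2.2.2.1 δ.2.2.2.2.2.2.2.2 := by
  obtain ⟨d, δ₃, δ₁, δ₄, δ₂, δ₆, δ₅, hd, h₁, h₂, h₃, h₂₁, heq⟩ := exists_diagonal_mul_gates_eq hU
  choose φ hφ hφd using fun i => exists_mem_Ico_cexp_mul_I_eq (hd i)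
  obtain rfl : (fun i => cexp (φ i * I)) = d := funext hφd
  refine ⟨(δ₁, δ₂, δ₃, δ₄, δ₅, δ₆, φ 0, φ 1, φ 2),
    ⟨h₁.2, h₂.2, h₁.1, h₂.1, h₃.2, h₃.1, hφ 0, hφ 1, hφ 2, h₁.3, h₂.3, h₂₁, h₃.3, ?_⟩, ?_⟩
  · rw [eulerProduct_eq_diagonal_mul_gates, heq]
  rintro ⟨η₁, η₂, η₃, η₄, η₅, η₆, η₇, η₈, η₉⟩
    ⟨m₁, m₂, m₃, m₄, m₅, m₆, m₇, m₈, m₉, r₁, r₂, r₂₁, r₃, heq'⟩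
  have heq'' := heq.trans
    (heq'.trans (eulerProduct_eq_diagonal_mul_gates ![η₇, η₈, η₉] η₃ η₁ η₄ η₂ η₆ η₅))
  obtain ⟨hphase, ⟨rfl, rfl⟩, ⟨rfl, rfl⟩, rfl, rfl⟩ := diagonal_mul_gates_inj
    (fun _ => Complex.exp_ne_zero _) (fun _ => Complex.exp_ne_zero _) h₁ h₂ h₃ h₂₁
    ⟨m₃, m₁, r₁⟩ ⟨m₄, m₂, r₂⟩ ⟨m₆, m₅, r₃⟩ r₂₁ heq''
  obtain rfl := injOn_cexp_mul_I_Ico (hφ 0) m₇ (congrFun hphase 0)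
  obtain rfl := injOn_cexp_mul_I_Ico (hφ 1) m₈ (congrFun hphase 1)
  obtain rfl := injOn_cexp_mul_I_Ico (hφ 2) m₉ (congrFun hphase 2)
  rfl

/-- Existence and uniqueness of the parameters in the three-mode
linear-optical Euler axiom (G). -/
theorem lopp_euler_3mode (γ₁ γ₂ γ₃ γ₄ : ℝ) :
    ∃! δ : ℝ × ℝ × ℝ × ℝ × ℝ × ℝ × ℝ × ℝ × ℝ, match δ with
      | (δ₁, δ₂, δ₃, δ₄, δ₅, δ₆, δ₇, δ₈, δ₉) =>
        δ₁ ∈ Set.Ico 0 Real.pi ∧ δ₂ ∈ Set.Ico 0 Real.pi ∧ δ₃ ∈ Set.Ico 0 Real.pi ∧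
        δ₄ ∈ Set.Ico 0 Real.pi ∧ δ₅ ∈ Set.Ico 0 Real.pi ∧ δ₆ ∈ Set.Ico 0 Real.pi ∧
        δ₇ ∈ Set.Ico 0 (2 * Real.pi) ∧ δ₈ ∈ Set.Ico 0 (2 * Real.pi) ∧
        δ₉ ∈ Set.Ico 0 (2 * Real.pi) ∧
        ((δ₃ = 0 ∨ δ₃ = Real.pi / 2) → δ₁ = 0) ∧
        ((δ₄ = 0 ∨ δ₄ = Real.pi / 2) → δ₂ = 0) ∧
        (δ₄ = 0 → δ₃ = 0) ∧
        ((δ₆ = 0 ∨ δ₆ = Real.pi / 2) → δ₅ = 0) ∧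
        B1mat γ₄ * B2mat γ₃ * Phi1mat γ₂ * B1mat γ₁
          = Phi3mat δ₉ * Phi2mat δ₈ * Phi1mat δ₇ * B2mat δ₆ * Phi2mat δ₅ *
            B1mat δ₄ * B2mat δ₃ * Phi1mat δ₂ * Phi2mat δ₁ :=
  lopp_euler_3mode_general <| mul_mem (mul_mem (mul_mem (B1mat_mem_unitaryGroup γ₄)
    (B2mat_mem_unitaryGroup γ₃)) (Phi1mat_mem_unitaryGroup γ₂)) (B1mat_mem_unitaryGroup γ₁)

end
end
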